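/- arXiv:1506.06692 — 2 statements merged into one kernel-verified Lean document; each statement's English description precedes it below -/
import Mathlib

section
/- Let B ⊂ ℤ^d be a finite set of n positions, let γ > 0 satisfy (2d+1)·γ ≤ 1/100, and let Ξ be a fixed real symmetric 2n×2n matrix (indexed by B × {1,2}, independent of u) with operator norm ‖Ξ‖ ≤ γ. Let M(u) = H_B(u) + Ξ, where H_B(u) is the real symmetric matrix indexed by B × {1,2} whose 2×2 diagonal block at x ∈ B is h_x = [[u_x, 1],[1, −u_x]] and whose 2×2 block between distinct x, y ∈ B is γ·I₂ if |x−y| = 1 and 0 otherwise, with (u_x)_{x∈B} i.i.d. uniform on [−1,1]. Let λ₁(u), …, λ_{2n}(u) denote the eigenvalues of M(u) counted with multiplicity. Then for every δ ∈ (0,1], the probability that min_{i<j} |λ_i(u) − λ_j(u)| < δ is at most δ^{1/(2n²)}·4·(4n)^{n+1}. -/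
open Matrix MeasureTheory

/-- The uniform probability measure on `[-1,1]`. -/
noncomputable def unif : Measure ℝ :=
  ((2 : NNReal))⁻¹ • (volume.restrict (Set.Icc (-1 : ℝ) 1))

instance : IsProbabilityMeasure unif := by
  constructor
  rw [unif, Measure.smul_apply, Measure.restrict_apply_univ, Real.volume_Icc]
  norm_num
  rw [ENNReal.smul_def]
  simp [ENNReal.inv_mul_cancel]

/-- The product of uniform measures on `[-1,1]^ι` (i.i.d. uniform random variables). -/
noncomputable def unifPi (ι : Type*) [Fintype ι] : Measure (ι → ℝ) :=
  Measure.pi fun _ => unif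

/-- The ℓ¹ distance `|x-y| = Σᵢ |xᵢ-yᵢ|` on `ℤ^d`, as a natural number. -/
def dist1 {d : ℕ} (x y : Fin d → ℤ) : ℕ := ∑ i, (x i - y i).natAbs

/-- The random block Hamiltonian: diagonal 2×2 block `[[u_x,1],[1,-u_x]]` at each
position `x ∈ B`, and block `γ·I₂` between nearest-neighbor positions. -/
noncomputable def Ham (d : ℕ) (γ : ℝ) (Λ : Finset (Fin d → ℤ)) (u : {x // x ∈ Λ} → ℝ) :
    Matrix ({x // x ∈ Λ} × Fin 2) ({x // x ∈ Λ} × Fin 2) ℝ := fun s t =>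
  if s.1 = t.1 then
    (if s.2 = t.2 then (if s.2 = 0 then u s.1 else -u s.1) else 1)
  else if dist1 (s.1 : Fin d → ℤ) (t.1 : Fin d → ℤ) = 1 then
    (if s.2 = t.2 then γ else 0)
  else 0

/-- The operator norm of a real matrix acting between Euclidean spaces. -/
noncomputable def opNorm {m n : Type*} [Fintype m] [Fintype n] [DecidableEq n]
    (M : Matrix m n ℝ) : ℝ :=
  ‖LinearMap.toContinuousLinearMap (Matrix.toEuclideanLin M)‖

lemma aux_half (s : ℝ) (hs0 : 0 ≤ s) (hs : s < 1) :
    ∫⁻ y in Set.Ioc (0:ℝ) 1, ENNReal.ofReal (|y| ^ (-s)) = ENNReal.ofReal (1 / (1 - s)) := by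
  have h1 : IntegrableOn (fun y : ℝ => y ^ (-s)) (Set.Ioc 0 1) := by
    have := (intervalIntegral.intervalIntegrable_rpow' (a := 0) (b := 1) (r := -s) (by linarith))
    rwa [intervalIntegrable_iff_integrableOn_Ioc_of_le (by norm_num)] at this
  have h2 : ∫ y in Set.Ioc (0:ℝ) 1, y ^ (-s) = 1 / (1 - s) := by
    rw [← intervalIntegral.integral_of_le (by norm_num), integral_rpow (by left; linarith)]
    rw [Real.one_rpow, Real.zero_rpow (by linarith)]
    congr 1 <;> ring
  rw [← h2, ofReal_integral_eq_lintegral_ofReal h1]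
  · apply setLIntegral_congr_fun measurableSet_Ioc
    intro y hy
    simp only [abs_of_pos hy.1]
  · filter_upwards [ae_restrict_mem measurableSet_Ioc] with y hy
    exact Real.rpow_nonneg hy.1.le _

lemma aux_full (s : ℝ) (hs0 : 0 ≤ s) (hs : s < 1) :
    ∫⁻ y in Set.Icc (-1:ℝ) 1, ENNReal.ofReal (|y| ^ (-s)) ≤ ENNReal.ofReal (2 / (1 - s)) := by
  have hneg : ∫⁻ y in Set.Ico (-1:ℝ) 0, ENNReal.ofReal (|y| ^ (-s))
      = ENNReal.ofReal (1 / (1 - s)) := by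
    rw [← aux_half s hs0 hs, ← lintegral_indicator measurableSet_Ico,
      ← lintegral_indicator measurableSet_Ioc,
      ← lintegral_neg_eq_self (μ := volume)
        (f := Set.indicator (Set.Ioc (0:ℝ) 1) fun y => ENNReal.ofReal (|y| ^ (-s)))]
    congr 1
    ext y
    by_cases hy : y ∈ Set.Ico (-1:ℝ) 0
    · rw [Set.indicator_of_mem hy, Set.indicator_of_mem, abs_neg]
      exact ⟨by linarith [hy.2], by linarith [hy.1]⟩
    · rw [Set.indicator_of_notMem hy, Set.indicator_of_notMem]
      intro h
      exact hy ⟨by linarith [h.2], by linarith [h.1]⟩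
  have hsub : Set.Icc (-1:ℝ) 1 ⊆ (Set.Ico (-1:ℝ) 0 ∪ Set.Ioc (0:ℝ) 1) ∪ {0} := by
    intro y hy
    rcases lt_trichotomy y 0 with h | h | h
    · left; left; exact ⟨hy.1, h⟩
    · right; exact h
    · left; right; exact ⟨h, hy.2⟩
  calc _ ≤ ∫⁻ y in (Set.Ico (-1:ℝ) 0 ∪ Set.Ioc (0:ℝ) 1) ∪ {0}, ENNReal.ofReal (|y| ^ (-s)) :=
        lintegral_mono_set hsub
    _ ≤ (∫⁻ y in Set.Ico (-1:ℝ) 0 ∪ Set.Ioc (0:ℝ) 1, ENNReal.ofReal (|y| ^ (-s)))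
        + ∫⁻ y in ({0} : Set ℝ), ENNReal.ofReal (|y| ^ (-s)) := lintegral_union_le _ _ _
    _ ≤ ((∫⁻ y in Set.Ico (-1:ℝ) 0, ENNReal.ofReal (|y| ^ (-s))) +
          ∫⁻ y in Set.Ioc (0:ℝ) 1, ENNReal.ofReal (|y| ^ (-s))) + 0 := by
        gcongr
        · exact lintegral_union_le _ _ _
        · simp
    _ = _ := by
        rw [hneg, aux_half s hs0 hs, add_zero, ← ENNReal.ofReal_add (by apply div_nonneg <;> linarith)
          (by apply div_nonneg <;> linarith)]
        congr 1; ring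

lemma aux_J (s : ℝ) (hs0 : 0 ≤ s) (hs : s < 1) (x : ℝ) :
    ∫⁻ t in Set.Icc (1/2:ℝ) 1, ENNReal.ofReal (1 + |t - x| ^ (-s))
      ≤ ENNReal.ofReal (1 + 2 / (1 - s)) := by
  have hm : Measurable fun y : ℝ => ENNReal.ofReal (|y| ^ (-s)) := by fun_prop
  calc _ ≤ ∫⁻ t in Set.Icc (1/2:ℝ) 1, (2 +
        (Set.Icc (-1:ℝ) 1).indicator (fun y => ENNReal.ofReal (|y| ^ (-s))) (t - x)) := by
        apply lintegral_mono
        intro t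
        simp only
        by_cases h : t - x ∈ Set.Icc (-1:ℝ) 1
        · rw [Set.indicator_of_mem h, ENNReal.ofReal_add (by norm_num) (by positivity)]
          gcongr
          simp
        · rw [Set.indicator_of_notMem h, add_zero]
          rw [← ENNReal.ofReal_ofNat]
          apply ENNReal.ofReal_le_ofReal
          have : 1 ≤ |t - x| := by
            by_contra h'
            push Not at h'
            rw [abs_lt] at h'
            exact h ⟨h'.1.le, h'.2.le⟩
          have := Real.rpow_le_one_of_one_le_of_nonpos this (show -s ≤ 0 by linarith)
          linarith
    _ = 1 + ∫⁻ t in Set.Icc (1/2:ℝ) 1,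
        (Set.Icc (-1:ℝ) 1).indicator (fun y => ENNReal.ofReal (|y| ^ (-s))) (t - x) := by
        rw [lintegral_add_left measurable_const]
        congr 1
        simp
        rw [← ENNReal.ofReal_ofNat, ← ENNReal.ofReal_mul (by norm_num)]
        norm_num
    _ ≤ 1 + ∫⁻ t,
        (Set.Icc (-1:ℝ) 1).indicator (fun y => ENNReal.ofReal (|y| ^ (-s))) (t - x) := by
        gcongr
        exact Measure.restrict_le_self
    _ ≤ 1 + ENNReal.ofReal (2 / (1 - s)) := by
        gcongr
        rw [lintegral_sub_right_eq_self
          (f := (Set.Icc (-1:ℝ) 1).indicator (fun y => ENNReal.ofReal (|y| ^ (-s)))),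
          lintegral_indicator measurableSet_Icc]
        exact aux_full s hs0 hs
    _ = _ := by
        rw [ENNReal.ofReal_add (by norm_num) (by apply div_nonneg <;> linarith)]
        simp

lemma aux_factor (p : Polynomial ℂ) : ∃ (m : ℕ) (z : Fin m → ℂ),
    m = p.natDegree ∧ ∀ w : ℂ, p.eval w = p.leadingCoeff * ∏ i, (w - z i) := by
  have hsp : p.Splits := IsAlgClosed.splits p
  have hc : p.roots.card = p.natDegree := hsp.natDegree_eq_card_roots.symm
  obtain ⟨l, hl⟩ : ∃ l : List ℂ, (l : Multiset ℂ) = p.roots := ⟨p.roots.toList, by simp⟩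
  have hlen : l.length = p.natDegree := by rw [← hc, ← hl]; simp
  refine ⟨_, fun i => l.get (i.cast hlen.symm), rfl, fun w => ?_⟩
  conv_lhs => rw [hsp.eq_prod_roots]
  rw [← hl, Polynomial.eval_mul, Polynomial.eval_C]
  congr 1
  rw [Multiset.map_coe, Multiset.prod_coe, Polynomial.eval_list_prod, List.map_map]
  have : ∏ i : Fin p.natDegree, (w - l.get (i.cast hlen.symm)) = ∏ i : Fin l.length, (w - l.get i) :=
    Fintype.prod_equiv (finCongr hlen.symm) _ _ (fun i => rfl)
  rw [this, ← List.prod_ofFn]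
  congr 1
  apply List.ext_get <;> simp

lemma poly_small (p : Polynomial ℂ) (hp0 : 1 ≤ ‖p.eval 0‖) (α s ε : ℝ) (hα : 0 ≤ α)
    (hs0 : 0 < s) (hs : s < 1) (h : α * p.natDegree ≤ s) (hε : 0 < ε) :
    volume {t : ℝ | t ∈ Set.Icc (1/2:ℝ) 1 ∧ ‖p.eval (t : ℂ)‖ ≤ ε}
      ≤ ENNReal.ofReal (ε ^ α * (1 + 2 / (1 - s))) := by
  obtain ⟨m, z, hm, hz⟩ := aux_factor p
  rw [← hm] at h
  have hεα : 0 < ε ^ α := Real.rpow_pos_of_pos hε _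
  have h1s : 0 ≤ 2 / (1 - s) := by apply div_nonneg <;> linarith
  -- pointwise bound
  have key : ∀ t ∈ Set.Icc (1/2:ℝ) 1, ‖p.eval (t : ℂ)‖ ≤ ε → (∀ i, t ≠ (z i).re) →
      1 ≤ ε ^ α * ∏ i, (1 + 1 / ‖(t:ℂ) - z i‖) ^ α := by
    intro t ht hpt hne
    have hpos : ∀ i, 0 < ‖(t:ℂ) - z i‖ := by
      intro i
      rw [norm_pos_iff]
      intro h0
      apply hne i
      have := congrArg Complex.re h0
      simp at this
      linarith
    have h1 : ‖p.eval 0‖ ≤ ‖p.eval (t:ℂ)‖ * ∏ i, (1 + 1 / ‖(t:ℂ) - z i‖) := by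
      rw [hz, hz, norm_mul, norm_mul, norm_prod, norm_prod, mul_assoc, ← Finset.prod_mul_distrib]
      apply mul_le_mul_of_nonneg_left _ (norm_nonneg _)
      apply Finset.prod_le_prod
      · intro i _; exact norm_nonneg _
      · intro i _
        have : ‖(t:ℂ) - z i‖ * (1 + 1 / ‖(t:ℂ) - z i‖) = ‖(t:ℂ) - z i‖ + 1 := by
          field_simp [(hpos i).ne']
        rw [this]
        have h3 : ‖(0:ℂ) - z i‖ ≤ ‖(t:ℂ) - z i‖ + ‖-(t:ℂ)‖ := by
          refine le_trans (le_of_eq ?_) (norm_add_le _ _)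
          congr 1; ring
        have h4 : ‖-(t:ℂ)‖ ≤ 1 := by
          rw [norm_neg, Complex.norm_real, Real.norm_eq_abs, abs_of_nonneg (by linarith [ht.1])]
          exact ht.2
        linarith
    have h2 : 1 ≤ ε * ∏ i, (1 + 1 / ‖(t:ℂ) - z i‖) := by
      refine hp0.trans (h1.trans ?_)
      gcongr
    have h3 := Real.one_le_rpow h2 hα
    rw [Real.mul_rpow hε.le (by positivity), ← Real.finsetProd_rpow _ _ (by intros; positivity)] at h3
    exact h3
  set N : Set ℝ := Set.range fun i => (z i).re with hN
  have hN0 : volume N = 0 := (Set.finite_range _).measure_zero _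
  have main : ∃ g : ℝ → ENNReal, (∫⁻ t in Set.Icc (1/2:ℝ) 1, g t
      ≤ ENNReal.ofReal (ε ^ α * (1 + 2 / (1 - s)))) ∧
      ∀ t ∈ Set.Icc (1/2:ℝ) 1, ‖p.eval (t : ℂ)‖ ≤ ε → (∀ i, t ≠ (z i).re) → 1 ≤ g t := by
    rcases Nat.eq_zero_or_pos m with hm0 | hm0
    · refine ⟨fun _ => ENNReal.ofReal (ε ^ α), ?_, ?_⟩
      · rw [setLIntegral_const, Real.volume_Icc, ← ENNReal.ofReal_mul hεα.le]
        apply ENNReal.ofReal_le_ofReal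
        gcongr
        linarith
      · intro t ht h1 h2
        have h3 := key t ht h1 h2
        rw [← ENNReal.ofReal_one]
        apply ENNReal.ofReal_le_ofReal
        have : IsEmpty (Fin m) := by rw [hm0]; infer_instance
        simpa using h3
    · have hmR : (0:ℝ) < m := by exact_mod_cast hm0
      refine ⟨fun t => ENNReal.ofReal (ε ^ α) * ∑ i, ENNReal.ofReal (1 / m) *
        ENNReal.ofReal (1 + |t - (z i).re| ^ (-s)), ?_, ?_⟩
      · rw [lintegral_const_mul _ (by fun_prop), lintegral_finsetSum _ (by intros; fun_prop),
          ENNReal.ofReal_mul hεα.le]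
        gcongr
        calc _ ≤ ∑ i : Fin m, ENNReal.ofReal (1 / m) * ENNReal.ofReal (1 + 2 / (1 - s)) := by
              apply Finset.sum_le_sum
              intro i _
              rw [lintegral_const_mul _ (by fun_prop)]
              gcongr
              exact aux_J s hs0.le hs _
          _ = _ := by
              rw [Finset.sum_const, Finset.card_univ, Fintype.card_fin, nsmul_eq_mul, ← mul_assoc,
                ← ENNReal.ofReal_natCast, ← ENNReal.ofReal_mul hmR.le,
                mul_one_div_cancel hmR.ne', ENNReal.ofReal_one, one_mul]
      · intro t ht h1 h2
        have h3 := key t ht h1 h2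
        have hpos : ∀ i, 0 < |t - (z i).re| := fun i => abs_pos.2 (sub_ne_zero.2 (h2 i))
        have hle : ∀ i, |t - (z i).re| ≤ ‖(t:ℂ) - z i‖ := by
          intro i
          have := Complex.abs_re_le_norm ((t:ℂ) - z i)
          simpa using this
        have h4 : ∏ i, (1 + 1 / ‖(t:ℂ) - z i‖) ^ α ≤ ∑ i, (1 / (m:ℝ)) * (1 + |t - (z i).re| ^ (-s)) := by
          calc _ ≤ ∏ i, ((1 + 1 / ‖(t:ℂ) - z i‖) ^ s) ^ (1 / (m:ℝ)) := by
                apply Finset.prod_le_prod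
                · intros; positivity
                · intro i _
                  rw [← Real.rpow_mul (by positivity)]
                  apply Real.rpow_le_rpow_of_exponent_le
                  · have : 0 ≤ 1 / ‖(t:ℂ) - z i‖ := by positivity
                    linarith
                  · rw [mul_one_div, le_div_iff₀ hmR]
                    exact h
            _ ≤ ∑ i, (1 / (m:ℝ)) * (1 + 1 / ‖(t:ℂ) - z i‖) ^ s := by
                apply Real.geom_mean_le_arith_mean_weighted
                · intros; positivity
                · rw [Finset.sum_const, Finset.card_univ, Fintype.card_fin, nsmul_eq_mul,
                    mul_one_div_cancel hmR.ne']
                · intros; positivity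
            _ ≤ _ := by
                apply Finset.sum_le_sum
                intro i _
                gcongr
                calc (1 + 1 / ‖(t:ℂ) - z i‖) ^ s ≤ (1 + 1 / |t - (z i).re|) ^ s := by
                      have := hpos i
                      have := hle i
                      gcongr
                  _ ≤ (1:ℝ) ^ s + (1 / |t - (z i).re|) ^ s :=
                      Real.rpow_add_le_add_rpow (by norm_num) (by positivity) hs0.le hs.le
                  _ = _ := by
                      rw [Real.one_rpow, one_div, Real.inv_rpow (abs_nonneg _), Real.rpow_neg (abs_nonneg _)]
        have h5 : 1 ≤ ε ^ α * ∑ i, (1 / (m:ℝ)) * (1 + |t - (z i).re| ^ (-s)) :=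
          h3.trans (by gcongr)
        have h6 := ENNReal.ofReal_le_ofReal h5
        rw [ENNReal.ofReal_one, ENNReal.ofReal_mul hεα.le, ENNReal.ofReal_sum_of_nonneg (by intros; positivity)] at h6
        simp only
        convert h6 using 4 with i
        rw [ENNReal.ofReal_mul (by positivity)]
  obtain ⟨g, hg1, hg2⟩ := main
  set S := {t : ℝ | t ∈ Set.Icc (1/2:ℝ) 1 ∧ ‖p.eval (t : ℂ)‖ ≤ ε} with hS
  have hSm : MeasurableSet S := by
    have : Continuous fun t : ℝ => ‖p.eval (t : ℂ)‖ :=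
      (p.continuous.comp Complex.continuous_ofReal).norm
    exact MeasurableSet.inter measurableSet_Icc (measurableSet_le this.measurable measurable_const)
  have hNm : MeasurableSet N := (Set.finite_range _).measurableSet
  calc volume S ≤ volume (S \ N) + volume N := by
        refine (measure_mono ?_).trans (measure_union_le _ _)
        intro t ht
        by_cases h : t ∈ N
        · right; exact h
        · left; exact ⟨ht, h⟩
    _ = volume (S \ N) := by rw [hN0, add_zero]
    _ = ∫⁻ t in S \ N, 1 := by simp
    _ ≤ ∫⁻ t in S \ N, g t := by
        apply setLIntegral_mono' (hSm.diff hNm)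
        intro t ht
        exact hg2 t ht.1.1 ht.1.2 (fun i hi => ht.2 ⟨i, hi.symm⟩)
    _ ≤ ∫⁻ t in Set.Icc (1/2:ℝ) 1, g t := lintegral_mono_set (fun t ht => ht.1.1)
    _ ≤ _ := hg1

/-- Discriminant-like determinant of power traces. -/
noncomputable def discM {R : Type*} [CommRing R] {S : Type*} [Fintype S] [DecidableEq S] (N : ℕ)
    (A : Matrix S S R) : R :=
  Matrix.det (Matrix.of fun k l : Fin N => Matrix.trace (A ^ ((k : ℕ) + (l : ℕ))))

lemma trace_pow_eigen {S : Type*} [Fintype S] [DecidableEq S] {A : Matrix S S ℝ}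
    (hA : A.IsHermitian) (k : ℕ) : Matrix.trace (A ^ k) = ∑ i, hA.eigenvalues i ^ k := by
  conv_lhs => rw [hA.spectral_theorem, ← map_pow, Unitary.conjStarAlgAut_apply,
    Matrix.trace_mul_cycle, ]
  simp [Matrix.diagonal_pow, Matrix.trace_diagonal]

lemma discM_eq {S : Type*} [Fintype S] [DecidableEq S] {A : Matrix S S ℝ}
    (hA : A.IsHermitian) (N : ℕ) (e : Fin N ≃ S) :
    discM N A = ∏ x ∈ (Finset.univ : Finset (Fin N)).sigma (fun i => Finset.Ioi i),
      |hA.eigenvalues (e x.1) - hA.eigenvalues (e x.2)| ^ 2 := by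
  have h1 : (Matrix.of fun k l : Fin N => Matrix.trace (A ^ ((k : ℕ) + (l : ℕ)))) =
      (Matrix.vandermonde (fun i => hA.eigenvalues (e i)))ᵀ *
        (Matrix.vandermonde (fun i => hA.eigenvalues (e i))) := by
    ext k l
    rw [Matrix.of_apply, trace_pow_eigen hA, Matrix.mul_apply, ← e.sum_comp]
    simp [Matrix.vandermonde_apply, pow_add]
  rw [discM, h1, Matrix.det_mul, Matrix.det_transpose, Matrix.det_vandermonde, Finset.prod_sigma,
    ← Finset.prod_mul_distrib]
  refine Finset.prod_congr rfl fun i _ => ?_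
  rw [← Finset.prod_mul_distrib]
  refine Finset.prod_congr rfl fun j _ => ?_
  rw [sq_abs]; ring

lemma card_pairs (N : ℕ) :
    2 * ((Finset.univ : Finset (Fin N)).sigma (fun i => Finset.Ioi i)).card = N * (N - 1) := by
  rw [Finset.card_sigma]
  simp only [Fin.card_Ioi]
  rw [Finset.sum_fin_eq_sum_range]
  have : ∑ i ∈ Finset.range N, (if h : i < N then N - 1 - i else 0)
      = ∑ i ∈ Finset.range N, (N - 1 - i) := by
    apply Finset.sum_congr rfl
    intro i hi
    simp [Finset.mem_range.1 hi]
  rw [this, Finset.sum_range_reflect (fun i => i), mul_comm, Finset.sum_range_id_mul_two]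

lemma discM_ge_one {S : Type*} [Fintype S] [DecidableEq S] {A : Matrix S S ℝ}
    (hA : A.IsHermitian) (N : ℕ) (e : Fin N ≃ S)
    (h : ∀ i j, i ≠ j → 1 ≤ |hA.eigenvalues i - hA.eigenvalues j|) : 1 ≤ discM N A := by
  rw [discM_eq hA N e]
  have : ∀ s : Finset (Σ _ : Fin N, Fin N), (∀ x ∈ s, x.1 < x.2) → 
      1 ≤ ∏ x ∈ s, |hA.eigenvalues (e x.1) - hA.eigenvalues (e x.2)| ^ 2 := by
    intro s hs
    apply Finset.one_le_prod
    intro x hx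
    apply one_le_pow₀
    apply h
    intro h'
    exact (hs x hx).ne (e.injective h')
  apply this
  intro x hx
  simpa using hx

lemma discM_le {S : Type*} [Fintype S] [DecidableEq S] {A : Matrix S S ℝ}
    (hA : A.IsHermitian) (N : ℕ) (e : Fin N ≃ S) (δ : ℝ)
    (h : ∀ i j, |hA.eigenvalues i - hA.eigenvalues j| ≤ 3) 
    (h2 : ∃ i j, i ≠ j ∧ |hA.eigenvalues i - hA.eigenvalues j| < δ) :
    discM N A ≤ δ ^ 2 * 9 ^ (N * (N - 1) / 2 - 1) := by
  rw [discM_eq hA N e]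
  have hc := card_pairs N
  set s := (Finset.univ : Finset (Fin N)).sigma (fun i => Finset.Ioi i) with hs
  have hex : ∃ x ∈ s, |hA.eigenvalues (e x.1) - hA.eigenvalues (e x.2)| < δ := by
    obtain ⟨i, j, hij, hd⟩ := h2
    rcases lt_or_gt_of_ne (fun h' => hij (e.symm.injective h')) with hl | hl
    · exact ⟨⟨e.symm i, e.symm j⟩, by simpa [hs] using hl, by simpa using hd⟩
    · exact ⟨⟨e.symm j, e.symm i⟩, by simpa [hs] using hl, by simpa [abs_sub_comm] using hd⟩
  obtain ⟨x, hx, hxd⟩ := hex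
  rw [← Finset.mul_prod_erase s _ hx]
  have hcard : (s.erase x).card = N * (N - 1) / 2 - 1 := by
    rw [Finset.card_erase_of_mem hx]; omega
  rw [← hcard, ← Finset.prod_const]
  apply mul_le_mul _ _ (by positivity) (by positivity)
  · gcongr
  · apply Finset.prod_le_prod
    · intros; positivity
    · intro y _
      have := h (e y.1) (e y.2)
      have h0 := abs_nonneg (hA.eigenvalues (e y.1) - hA.eigenvalues (e y.2))
      nlinarith

lemma discM_map {R R' : Type*} [CommRing R] [CommRing R'] {S : Type*} [Fintype S] [DecidableEq S]
    (N : ℕ) (f : R →+* R') (A : Matrix S S R) : f (discM N A) = discM N (f.mapMatrix A) := by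
  rw [discM, discM, RingHom.map_det]
  congr 1
  ext k l
  simp only [RingHom.mapMatrix_apply, Matrix.map_apply, Matrix.of_apply]
  rw [← RingHom.mapMatrix_apply, ← map_pow, RingHom.mapMatrix_apply]
  simp [Matrix.trace, map_sum]

open Polynomial in
lemma disc_poly {S : Type*} [Fintype S] [DecidableEq S] (N : ℕ) (A W : Matrix S S ℝ) :
    ∃ Q : ℝ[X], Q.natDegree ≤ N * (N - 1) ∧ ∀ t : ℝ, Q.eval t = discM N (A + t • W) := by
  set P : Matrix S S ℝ[X] := A.map C + (X : ℝ[X]) • W.map C with hP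
  refine ⟨discM N P, ?_, ?_⟩
  · have h1 : ∀ k i j, ((P ^ k) i j).natDegree ≤ k := by
      intro k
      induction k with
      | zero =>
        intro i j
        rw [pow_zero, Matrix.one_apply]
        split_ifs <;> simp
      | succ k ih =>
        intro i j
        rw [pow_succ, Matrix.mul_apply]
        apply natDegree_sum_le_of_forall_le
        intro l _
        refine natDegree_mul_le.trans (add_le_add (ih i l) ?_)
        simp only [hP, Matrix.add_apply, Matrix.map_apply, Matrix.smul_apply, smul_eq_mul]
        refine (natDegree_add_le _ _).trans ?_
        rw [natDegree_C]
        refine max_le (by norm_num) ?_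
        exact (natDegree_mul_le).trans (by simp)
    have h2 : ∀ k, (Matrix.trace (P ^ k)).natDegree ≤ k := by
      intro k
      rw [Matrix.trace]
      apply natDegree_sum_le_of_forall_le
      intro i _
      exact h1 k i i
    rw [discM, Matrix.det_apply]
    apply natDegree_sum_le_of_forall_le
    intro σ _
    refine (natDegree_smul_le _ _).trans ?_
    refine (natDegree_prod_le _ _).trans ?_
    calc _ ≤ ∑ i : Fin N, (((σ i : Fin N) : ℕ) + (i : ℕ)) := by
          apply Finset.sum_le_sum
          intro i _
          exact h2 _
      _ = N * (N - 1) := by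
          rw [Finset.sum_add_distrib, Equiv.sum_comp σ (fun i : Fin N => (i : ℕ)), ← two_mul,
            mul_comm, Fin.sum_univ_eq_sum_range (fun i => i), Finset.sum_range_id_mul_two]
  · intro t
    have := discM_map N (evalRingHom t) P
    rw [coe_evalRingHom] at this
    rw [this]
    congr 1
    ext i j
    simp [hP]
    ring

lemma discM_continuous {S : Type*} [Fintype S] [DecidableEq S] (N : ℕ) {T : Type*}
    [TopologicalSpace T] (M : T → Matrix S S ℝ) (hM : Continuous M) :
    Continuous fun u => discM N (M u) := by
  unfold discM
  apply Continuous.matrix_det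
  apply continuous_matrix
  intro i j
  exact (hM.pow _).matrix_trace

lemma unifPi_apply {ι : Type*} [Fintype ι] (E : Set (ι → ℝ)) (hE : MeasurableSet E) :
    unifPi ι E = ENNReal.ofReal ((1/2) ^ Fintype.card ι) *
      volume (E ∩ Set.univ.pi fun _ => Set.Icc (-1:ℝ) 1) := by
  have : unifPi ι = ENNReal.ofReal ((1/2) ^ Fintype.card ι) •
      (volume.restrict (Set.univ.pi fun _ : ι => Set.Icc (-1:ℝ) 1)) := by
    rw [unifPi]
    apply Measure.pi_eq
    intro s hs
    rw [Measure.smul_apply, volume_pi, Measure.restrict_pi_pi, Measure.pi_pi, smul_eq_mul]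
    have : ∀ i, unif (s i) = ENNReal.ofReal (1/2) * (volume.restrict (Set.Icc (-1:ℝ) 1)) (s i) := by
      intro i
      rw [unif, Measure.smul_apply, ENNReal.smul_def, smul_eq_mul]
      congr 1
      rw [ENNReal.ofReal]
      congr 1
      ext
      simp
    simp_rw [this]
    rw [Finset.prod_mul_distrib, Finset.prod_const, Finset.card_univ, ENNReal.ofReal_pow (by norm_num)]
  rw [this, Measure.smul_apply, Measure.restrict_apply hE, smul_eq_mul]

lemma measure_part {ι : Type*} [Fintype ι] (n : ℕ) (hn : n = Fintype.card ι) (hn1 : 1 ≤ n)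
    (c : ι → ℝ) (hc0 : ∀ i, 0 ≤ c i) (hc1 : ∀ i, c i ≤ 2 * n - 2) (E : Set (ι → ℝ))
    (hE : MeasurableSet E) (hEK : E ⊆ Set.univ.pi fun _ => Set.Icc (-1:ℝ) 1) (b : ENNReal)
    (hb : ∀ v : ι → ℝ, volume {t : ℝ | t ∈ Set.Icc (1/2:ℝ) 1 ∧ c + t • (v - c) ∈ E} ≤ b) :
    unifPi ι E ≤ ENNReal.ofReal (2 * (2 * n) ^ n) * b := by
  set V : Set (ι → ℝ) := Set.univ.pi fun i => Set.Icc (c i - 2 * (2 * n - 1)) (c i + 2) with hV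
  have hVm : MeasurableSet V := MeasurableSet.univ_pi fun i => measurableSet_Icc
  have hVvol : volume V = ENNReal.ofReal ((4 * n) ^ n) := by
    rw [hV, volume_pi, Measure.pi_pi]
    simp_rw [Real.volume_Icc]
    have : ∀ i, c i + 2 - (c i - 2 * (2 * (n:ℝ) - 1)) = 4 * n := by intro i; ring
    simp_rw [this]
    rw [Finset.prod_const, Finset.card_univ, ← hn, ENNReal.ofReal_pow (by positivity)]
  have step1 : ∀ t ∈ Set.Icc (1/2:ℝ) 1,
      volume E ≤ volume (V ∩ {v | c + t • (v - c) ∈ E}) := by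
    intro t ht
    have ht0 : 0 < t := by linarith [ht.1]
    have hsub : E ⊆ AffineMap.homothety c t '' (V ∩ {v | c + t • (v - c) ∈ E}) := by
      intro u hu
      have e1 : c + t • (c + t⁻¹ • (u - c) - c) = u := by
        ext i
        simp
        field_simp
        ring
      refine ⟨c + t⁻¹ • (u - c), ⟨?_, ?_⟩, ?_⟩
      · intro i _
        have h1 := hEK hu i (Set.mem_univ _)
        simp only [Pi.add_apply, Pi.smul_apply, Pi.sub_apply, smul_eq_mul]
        have ht1 : 1 ≤ t⁻¹ := (one_le_inv₀ ht0).2 ht.2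
        have ht2 : t⁻¹ ≤ 2 := by
          rw [inv_le_comm₀ ht0 (by norm_num)]; linarith [ht.1]
        have h2 := hc0 i
        have h3 := hc1 i
        have h4 : (1:ℝ) ≤ n := by exact_mod_cast hn1
        have h5 := h1.1
        have h6 := h1.2
        constructor
        · nlinarith
        · nlinarith
      · simp only [Set.mem_ofPred_eq]
        rw [e1]; exact hu
      · rw [AffineMap.homothety_apply, vsub_eq_sub, vadd_eq_add, add_comm]
        exact e1
    calc volume E ≤ _ := measure_mono hsub
      _ = ENNReal.ofReal |t ^ Module.finrank ℝ (ι → ℝ)| *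
          volume (V ∩ {v | c + t • (v - c) ∈ E}) := Measure.addHaar_image_homothety _ _ _ _
      _ ≤ 1 * volume (V ∩ {v | c + t • (v - c) ∈ E}) := by
          gcongr
          rw [← ENNReal.ofReal_one]
          apply ENNReal.ofReal_le_ofReal
          rw [abs_of_nonneg (by positivity)]
          exact pow_le_one₀ ht0.le ht.2
      _ = _ := one_mul _
  have hmeas : Measurable (fun x : ℝ × (ι → ℝ) => E.indicator (fun _ => (1:ENNReal)) (c + x.1 • (x.2 - c))) := by
    have : Continuous fun x : ℝ × (ι → ℝ) => c + x.1 • (x.2 - c) := by fun_prop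
    exact (measurable_const.indicator hE).comp this.measurable
  have hslice : ∀ t : ℝ, MeasurableSet {v | c + t • (v - c) ∈ E} := by
    intro t
    have : Continuous fun v : ι → ℝ => c + t • (v - c) := by fun_prop
    exact this.measurable hE
  have hslice' : ∀ v, MeasurableSet {t : ℝ | c + t • (v - c) ∈ E} := by
    intro v
    have : Continuous fun t : ℝ => c + t • (v - c) := by fun_prop
    exact this.measurable hE
  have step2 : ENNReal.ofReal (1/2) * volume E ≤ ENNReal.ofReal ((4 * n) ^ n) * b := by
    calc ENNReal.ofReal (1/2) * volume E = ∫⁻ t in Set.Icc (1/2:ℝ) 1, volume E := by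
          rw [setLIntegral_const, Real.volume_Icc, mul_comm]; norm_num
      _ ≤ ∫⁻ t in Set.Icc (1/2:ℝ) 1, ∫⁻ v in V, E.indicator (fun _ => (1:ENNReal)) (c + t • (v - c)) := by
          apply setLIntegral_mono' measurableSet_Icc
          intro t ht
          refine (step1 t ht).trans (le_of_eq ?_)
          have : (fun v => E.indicator (fun _ => (1:ENNReal)) (c + t • (v - c))) =
            {v | c + t • (v - c) ∈ E}.indicator 1 := by ext v; rfl
          rw [this, lintegral_indicator_one (hslice t), Measure.restrict_apply (hslice t), Set.inter_comm]
      _ = ∫⁻ v in V, ∫⁻ t in Set.Icc (1/2:ℝ) 1, E.indicator (fun _ => (1:ENNReal)) (c + t • (v - c)) := by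
          apply lintegral_lintegral_swap
          exact hmeas.aemeasurable
      _ ≤ ∫⁻ v in V, b := by
          apply lintegral_mono
          intro v
          refine le_trans (le_of_eq ?_) (hb v)
          have : (fun t : ℝ => E.indicator (fun _ => (1:ENNReal)) (c + t • (v - c))) =
            {t | c + t • (v - c) ∈ E}.indicator 1 := by ext v; rfl
          simp only
          rw [this, lintegral_indicator_one (hslice' v), Measure.restrict_apply (hslice' v), Set.inter_comm]
          rfl
      _ = _ := by rw [setLIntegral_const, hVvol, mul_comm]
  rw [unifPi_apply E hE, Set.inter_eq_left.2 hEK, ← hn]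
  have e1 : ENNReal.ofReal ((1/2) ^ n) * volume E =
      ENNReal.ofReal (2 * (1/2) ^ n) * (ENNReal.ofReal (1/2) * volume E) := by
    rw [← mul_assoc, ← ENNReal.ofReal_mul (by positivity)]
    congr 2
    ring
  rw [e1]
  calc _ ≤ ENNReal.ofReal (2 * (1/2) ^ n) * (ENNReal.ofReal ((4 * n) ^ n) * b) := by gcongr
    _ = _ := by
      rw [← mul_assoc, ← ENNReal.ofReal_mul (by positivity)]
      congr 2
      rw [mul_assoc, ← mul_pow]
      congr 2
      ring


/-- Euclidean norm of a plain function. -/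
noncomputable def N2 {S : Type*} [Fintype S] (w : S → ℝ) : ℝ := ‖WithLp.toLp 2 w‖

lemma N2_nonneg {S : Type*} [Fintype S] (w : S → ℝ) : 0 ≤ N2 w := norm_nonneg _

lemma N2_sq {S : Type*} [Fintype S] (w : S → ℝ) : N2 w ^ 2 = ∑ s, w s ^ 2 := by
  rw [N2, EuclideanSpace.real_norm_sq_eq]

lemma N2_add {S : Type*} [Fintype S] (v w : S → ℝ) : N2 (v + w) ≤ N2 v + N2 w := by
  rw [N2, WithLp.toLp_add]; exact norm_add_le _ _

lemma N2_sub {S : Type*} [Fintype S] (v w : S → ℝ) : N2 (v - w) ≤ N2 v + N2 w := by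
  rw [N2, WithLp.toLp_sub]; exact norm_sub_le _ _

lemma N2_le {S : Type*} [Fintype S] (w : S → ℝ) (c : ℝ) (hc : 0 ≤ c) (h : ∑ s, w s ^ 2 ≤ c ^ 2) :
    N2 w ≤ c := by
  rw [← N2_sq] at h
  exact le_of_sq_le_sq h hc

lemma N2_opNorm {S : Type*} [Fintype S] [DecidableEq S] (A : Matrix S S ℝ) (w : S → ℝ) :
    N2 (A *ᵥ w) ≤ opNorm A * N2 w := by
  have := (LinearMap.toContinuousLinearMap (Matrix.toEuclideanLin A)).le_opNorm (WithLp.toLp 2 w)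
  simpa [N2, opNorm, Matrix.toLpLin_apply] using this

lemma N2_schur {S : Type*} [Fintype S] (K : Matrix S S ℝ) (R : ℝ) (hR : 0 ≤ R)
    (h0 : ∀ s t, 0 ≤ K s t) (hr : ∀ s, ∑ t, K s t ≤ R) (hsym : ∀ s t, K s t = K t s)
    (w : S → ℝ) : N2 (K *ᵥ w) ≤ R * N2 w := by
  apply N2_le _ _ (mul_nonneg hR (N2_nonneg _))
  rw [mul_pow, N2_sq]
  have h1 : ∀ s, (K *ᵥ w) s ^ 2 ≤ R * ∑ t, K s t * w t ^ 2 := by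
    intro s
    have hcs := Finset.sum_mul_sq_le_sq_mul_sq Finset.univ (fun t => Real.sqrt (K s t))
      (fun t => Real.sqrt (K s t) * w t)
    have e1 : ∀ t, Real.sqrt (K s t) * (Real.sqrt (K s t) * w t) = K s t * w t := by
      intro t; rw [← mul_assoc, Real.mul_self_sqrt (h0 s t)]
    have e2 : ∀ t, Real.sqrt (K s t) ^ 2 = K s t := fun t => Real.sq_sqrt (h0 s t)
    simp only [e1, mul_pow, e2] at hcs
    refine hcs.trans ?_
    apply mul_le_mul_of_nonneg_right (hr s)
    exact Finset.sum_nonneg fun t _ => mul_nonneg (h0 s t) (sq_nonneg _)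
  calc ∑ s, (K *ᵥ w) s ^ 2 ≤ ∑ s, R * ∑ t, K s t * w t ^ 2 := Finset.sum_le_sum fun s _ => h1 s
    _ = R * ∑ t, (∑ s, K t s) * w t ^ 2 := by
      rw [← Finset.mul_sum, Finset.sum_comm]
      congr 1
      refine Finset.sum_congr rfl fun t _ => ?_
      rw [Finset.sum_mul]
      refine Finset.sum_congr rfl fun s _ => ?_
      rw [hsym]
    _ ≤ R * ∑ t, R * w t ^ 2 := by
      gcongr with t
      exact hr t
    _ = R ^ 2 * ∑ t, w t ^ 2 := by rw [← Finset.mul_sum]; ring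

lemma nbr_card {d : ℕ} (x : Fin d → ℤ) (B : Finset (Fin d → ℤ)) :
    (B.filter fun y => dist1 x y = 1).card ≤ 2 * d := by
  classical
  have hsub : (B.filter fun y => dist1 x y = 1) ⊆
      (Finset.univ : Finset (Fin d × Bool)).image
        (fun p => Function.update x p.1 (x p.1 + if p.2 then 1 else -1)) := by
    intro y hy
    rw [Finset.mem_filter] at hy
    have h := hy.2
    unfold dist1 at h
    have hex : ∃ i, (x i - y i).natAbs ≠ 0 := by
      by_contra hcon
      push Not at hcon
      rw [Finset.sum_eq_zero (fun i _ => hcon i)] at h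
      exact absurd h (by norm_num)
    obtain ⟨i, hi⟩ := hex
    rw [← Finset.add_sum_erase _ _ (Finset.mem_univ i)] at h
    have h1 : (x i - y i).natAbs = 1 := by omega
    have h2 : ∑ j ∈ Finset.univ.erase i, (x j - y j).natAbs = 0 := by omega
    rw [Finset.sum_eq_zero_iff] at h2
    have h3 : ∀ j, j ≠ i → y j = x j := by
      intro j hj
      have := h2 j (Finset.mem_erase.2 ⟨hj, Finset.mem_univ _⟩)
      omega
    rw [Finset.mem_image]
    rcases Int.natAbs_eq_iff.1 h1 with h4 | h4
    · refine ⟨(i, false), Finset.mem_univ _, ?_⟩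
      ext j
      by_cases hj : j = i
      · subst hj; simp; omega
      · simp [Function.update_of_ne hj, h3 j hj]
    · refine ⟨(i, true), Finset.mem_univ _, ?_⟩
      ext j
      by_cases hj : j = i
      · subst hj; simp; omega
      · simp [Function.update_of_ne hj, h3 j hj]
  refine (Finset.card_le_card hsub).trans (Finset.card_image_le.trans ?_)
  simp [mul_comm]

lemma dist1_comm {d : ℕ} (x y : Fin d → ℤ) : dist1 x y = dist1 y x := by
  unfold dist1
  refine Finset.sum_congr rfl fun i _ => ?_
  omega

/-- The hopping part of the Hamiltonian. -/
noncomputable def hop (d : ℕ) (γ : ℝ) (Λ : Finset (Fin d → ℤ)) :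
    Matrix ({x // x ∈ Λ} × Fin 2) ({x // x ∈ Λ} × Fin 2) ℝ := fun s t =>
  if s.1 = t.1 then 0 else if dist1 (s.1 : Fin d → ℤ) (t.1 : Fin d → ℤ) = 1 then
    (if s.2 = t.2 then γ else 0) else 0

lemma hop_bound (d : ℕ) (γ : ℝ) (hγ : 0 < γ) (B : Finset (Fin d → ℤ))
    (w : {x // x ∈ B} × Fin 2 → ℝ) : N2 (hop d γ B *ᵥ w) ≤ (2 * d * γ) * N2 w := by
  apply N2_schur _ _ (by positivity)
  · intro s t; unfold hop; split_ifs <;> linarith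
  · intro s
    rw [Fintype.sum_prod_type]
    calc _ ≤ ∑ y : {x // x ∈ B}, if dist1 (s.1 : Fin d → ℤ) (y : Fin d → ℤ) = 1 then γ else 0 := by
          apply Finset.sum_le_sum
          intro y _
          unfold hop
          rw [Fin.sum_univ_two]
          obtain ⟨s1, s2⟩ := s
          fin_cases s2 <;> simp <;> split_ifs <;> linarith
      _ = ∑ y ∈ B, if dist1 (s.1 : Fin d → ℤ) y = 1 then γ else 0 :=
          Finset.sum_coe_sort B (fun y => if dist1 (s.1 : Fin d → ℤ) y = 1 then γ else 0)
      _ = (B.filter fun y => dist1 (s.1 : Fin d → ℤ) y = 1).card * γ := by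
          rw [← Finset.sum_filter, Finset.sum_const, nsmul_eq_mul]
      _ ≤ _ := by
          gcongr
          exact_mod_cast nbr_card _ _
  · intro s t
    unfold hop
    rw [dist1_comm]
    simp only [eq_comm]

lemma sum_blocks {X : Type*} [Fintype X] (f : X × Fin 2 → ℝ) :
    ∑ s, f s = ∑ x, (f (x, 0) + f (x, 1)) := by
  rw [Fintype.sum_prod_type]
  simp

/-- Action of the block diagonal part. -/
def H0 {X : Type*} (u : X → ℝ) (w : X × Fin 2 → ℝ) : X × Fin 2 → ℝ := fun s =>
  if s.2 = 0 then u s.1 * w (s.1, 0) + w (s.1, 1) else w (s.1, 0) - u s.1 * w (s.1, 1)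

lemma Ham_mulVec (d : ℕ) (γ : ℝ) (B : Finset (Fin d → ℤ)) (u : {x // x ∈ B} → ℝ)
    (w : {x // x ∈ B} × Fin 2 → ℝ) : Ham d γ B u *ᵥ w = H0 u w + hop d γ B *ᵥ w := by
  ext s
  have : ∀ t, Ham d γ B u s t * w t = hop d γ B s t * w t +
      (if s.1 = t.1 then (if s.2 = t.2 then (if s.2 = 0 then u s.1 else -u s.1) else 1) * w t
        else 0) := by
    intro t
    unfold Ham hop
    by_cases h : s.1 = t.1
    · simp [h]
    · simp [h]
  rw [Pi.add_apply, Matrix.mulVec, Matrix.mulVec, dotProduct, dotProduct]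
  simp_rw [this]
  rw [Finset.sum_add_distrib, add_comm]
  congr 1
  rw [sum_blocks]
  obtain ⟨x, a⟩ := s
  simp only
  rw [Finset.sum_eq_single x]
  · fin_cases a <;> simp [H0]
    ring
  · intro y _ hy
    simp [hy.symm]
  · simp

lemma pert_bound (d : ℕ) (γ : ℝ) (hγ : 0 < γ) (hγs : (2 * (d : ℝ) + 1) * γ ≤ 1 / 100)
    (B : Finset (Fin d → ℤ))
    (Ξ : Matrix ({x // x ∈ B} × Fin 2) ({x // x ∈ B} × Fin 2) ℝ) (hΞ : opNorm Ξ ≤ γ)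
    (u : {x // x ∈ B} → ℝ) (w : {x // x ∈ B} × Fin 2 → ℝ) :
    N2 ((Ham d γ B u + Ξ) *ᵥ w - H0 u w) ≤ 1 / 100 * N2 w := by
  have e : (Ham d γ B u + Ξ) *ᵥ w - H0 u w = hop d γ B *ᵥ w + Ξ *ᵥ w := by
    rw [Matrix.add_mulVec, Ham_mulVec]; abel
  rw [e]
  have h1 := N2_add (hop d γ B *ᵥ w) (Ξ *ᵥ w)
  have h2 := hop_bound d γ hγ B w
  have h3 := N2_opNorm Ξ w
  have h4 := N2_nonneg w
  nlinarith [mul_le_mul_of_nonneg_right hΞ h4, mul_le_mul_of_nonneg_right hγs h4]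

lemma H0_upper {X : Type*} [Fintype X] (u : X → ℝ) (hu : ∀ x, u x ∈ Set.Icc (-1:ℝ) 1)
    (w : X × Fin 2 → ℝ) : N2 (H0 u w) ≤ 1.45 * N2 w := by
  apply N2_le _ _ (by have := N2_nonneg w; positivity)
  rw [mul_pow, N2_sq, sum_blocks, sum_blocks, Finset.mul_sum]
  apply Finset.sum_le_sum
  intro x _
  simp only [H0]
  have h : u x ^ 2 ≤ 1 := by
    have := hu x
    nlinarith [this.1, this.2]
  simp
  nlinarith [sq_nonneg (w (x,0)), sq_nonneg (w (x,1)),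
    mul_le_mul_of_nonneg_right h (sq_nonneg (w (x,0))),
    mul_le_mul_of_nonneg_right h (sq_nonneg (w (x,1)))]

lemma block_lower (c μ a b : ℝ) : (Real.sqrt (1 + c ^ 2) - |μ|) ^ 2 * (a ^ 2 + b ^ 2) ≤
    (c * a + b - μ * a) ^ 2 + (a - c * b - μ * b) ^ 2 := by
  set r := Real.sqrt (1 + c ^ 2) with hr
  have hr0 : 0 ≤ r := Real.sqrt_nonneg _
  have hr2 : r ^ 2 = 1 + c ^ 2 := Real.sq_sqrt (by positivity)
  have h1 : |c * (a ^ 2 - b ^ 2) + 2 * a * b| ≤ r * (a ^ 2 + b ^ 2) := by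
    apply abs_le_of_sq_le_sq _ (by positivity)
    rw [mul_pow, hr2]
    nlinarith [sq_nonneg (a ^ 2 - b ^ 2 - c * (2 * a * b))]
  have h2 : μ * (c * (a ^ 2 - b ^ 2) + 2 * a * b) ≤ |μ| * (r * (a ^ 2 + b ^ 2)) := by
    refine (le_abs_self _).trans ?_
    rw [abs_mul]
    gcongr
  have h3 : |μ| ^ 2 = μ ^ 2 := sq_abs μ
  have e1 : (r - |μ|) ^ 2 * (a ^ 2 + b ^ 2) = (1 + c ^ 2 + μ ^ 2) * (a ^ 2 + b ^ 2)
      - 2 * (|μ| * (r * (a ^ 2 + b ^ 2))) := by rw [← hr2, ← h3]; ring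
  rw [e1]
  nlinarith

lemma block_exc (c μ a b σ : ℝ) (hσ : σ = 1 ∨ σ = -1) (hσμ : 0 ≤ σ * μ)
    (h : (c + σ * Real.sqrt (1 + c ^ 2)) * a + b = 0) : a ^ 2 + b ^ 2 ≤
    (c * a + b - μ * a) ^ 2 + (a - c * b - μ * b) ^ 2 := by
  set r := Real.sqrt (1 + c ^ 2) with hr
  have hr0 : 0 ≤ r := Real.sqrt_nonneg _
  have hr2 : r ^ 2 = 1 + c ^ 2 := Real.sq_sqrt (by positivity)
  have hr1 : 1 ≤ r := by nlinarith [sq_nonneg c]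
  have hσ2 : σ ^ 2 = 1 := by rcases hσ with h | h <;> rw [h] <;> norm_num
  have hb : b = -(c + σ * r) * a := by linarith
  have h1 : c * a + b = - (σ * r) * a := by rw [hb]; ring
  have h2 : a - c * b = - (σ * r) * b := by
    rw [hb]
    linear_combination (-a) * hr2 + (- a * r ^ 2) * hσ2
  rw [h1, h2]
  have e : (-(σ * r) * a - μ * a) ^ 2 + (-(σ * r) * b - μ * b) ^ 2 =
      (r ^ 2 + 2 * (σ * μ) * r + μ ^ 2) * (a ^ 2 + b ^ 2) := by
    linear_combination (r ^ 2 * (a ^ 2 + b ^ 2)) * hσ2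
  rw [e]
  have : 1 ≤ r ^ 2 + 2 * (σ * μ) * r + μ ^ 2 := by
    have := mul_nonneg hσμ hr0
    nlinarith [sq_nonneg μ]
  nlinarith [sq_nonneg a, sq_nonneg b]

lemma H0_lower {X : Type*} [Fintype X] (c : X → ℝ)
    (hc : ∀ x y, x ≠ y → 1.2 ≤ |Real.sqrt (1 + c x ^ 2) - Real.sqrt (1 + c y ^ 2)|) (μ : ℝ) :
    ∃ L : (X × Fin 2 → ℝ) →ₗ[ℝ] ℝ, ∀ w, L w = 0 → 0.6 * N2 w ≤ N2 (H0 c w - μ • w) := by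
  have red : ∀ w : X × Fin 2 → ℝ, (∀ x, 0.36 * (w (x,0) ^ 2 + w (x,1) ^ 2) ≤
      (c x * w (x,0) + w (x,1) - μ * w (x,0)) ^ 2 + (w (x,0) - c x * w (x,1) - μ * w (x,1)) ^ 2) →
      0.6 * N2 w ≤ N2 (H0 c w - μ • w) := by
    intro w hw
    apply le_of_sq_le_sq _ (N2_nonneg _)
    rw [mul_pow, N2_sq, N2_sq, sum_blocks, sum_blocks, Finset.mul_sum]
    apply Finset.sum_le_sum
    intro x _
    have := hw x
    simp [H0]
    norm_num at this ⊢
    linarith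
  have nonexc : ∀ (w : X × Fin 2 → ℝ) x, 0.6 ≤ |Real.sqrt (1 + c x ^ 2) - (abs μ)| →
      0.36 * (w (x,0) ^ 2 + w (x,1) ^ 2) ≤
      (c x * w (x,0) + w (x,1) - μ * w (x,0)) ^ 2
        + (w (x,0) - c x * w (x,1) - μ * w (x,1)) ^ 2 := by
    intro w x hx
    refine le_trans ?_ (block_lower (c x) μ (w (x,0)) (w (x,1)))
    gcongr
    rw [← sq_abs]
    nlinarith
  by_cases hex : ∃ x, |Real.sqrt (1 + c x ^ 2) - (abs μ)| < 0.6
  · obtain ⟨x0, hx0⟩ := hex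
    obtain ⟨σ, hσ, hσμ⟩ : ∃ σ : ℝ, (σ = 1 ∨ σ = -1) ∧ 0 ≤ σ * μ := by
      rcases le_total 0 μ with h | h
      · exact ⟨1, Or.inl rfl, by linarith⟩
      · exact ⟨-1, Or.inr rfl, by linarith⟩
    refine ⟨(c x0 + σ * Real.sqrt (1 + c x0 ^ 2)) • LinearMap.proj (x0, (0 : Fin 2)) +
      LinearMap.proj (x0, (1 : Fin 2)), ?_⟩
    intro w hw
    simp only [LinearMap.add_apply, LinearMap.smul_apply, LinearMap.proj_apply, smul_eq_mul] at hw
    apply red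
    intro x
    by_cases hx : x = x0
    · subst hx
      have := block_exc (c x) μ _ _ σ hσ hσμ hw
      nlinarith [sq_nonneg (w (x,0)), sq_nonneg (w (x,1))]
    · apply nonexc
      have h1 := hc x x0 hx
      have h2 := abs_sub_le (Real.sqrt (1 + c x ^ 2)) |μ| (Real.sqrt (1 + c x0 ^ 2))
      rw [abs_sub_comm |μ|] at h2
      norm_num at *
      linarith
  · push Not at hex
    exact ⟨0, fun w _ => red w fun x => nonexc w x (hex x)⟩

lemma eig_upper {S : Type*} [Fintype S] [DecidableEq S] {A : Matrix S S ℝ} (hA : A.IsHermitian)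
    (C : ℝ) (h : ∀ w, N2 (A *ᵥ w) ≤ C * N2 w) (i : S) : |hA.eigenvalues i| ≤ C := by
  have h1 := h (hA.eigenvectorBasis i)
  rw [hA.mulVec_eigenvectorBasis] at h1
  have h2 : N2 (hA.eigenvectorBasis i : S → ℝ) = 1 := hA.eigenvectorBasis.orthonormal.1 i
  rw [N2, WithLp.toLp_smul, norm_smul, Real.norm_eq_abs, ← N2, h2] at h1
  linarith

lemma eig_gap {S : Type*} [Fintype S] [DecidableEq S] {A : Matrix S S ℝ} (hA : A.IsHermitian)
    (F : (S → ℝ) → (S → ℝ)) (h : ∀ w, N2 (A *ᵥ w - F w) ≤ 1 / 100 * N2 w)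
    (hF : ∀ μ : ℝ, ∃ L : (S → ℝ) →ₗ[ℝ] ℝ, ∀ w, L w = 0 → 0.6 * N2 w ≤ N2 (F w - μ • w))
    (i j : S) (hij : i ≠ j) : 1 ≤ |hA.eigenvalues i - hA.eigenvalues j| := by
  by_contra hlt
  push Not at hlt
  set μ := (hA.eigenvalues i + hA.eigenvalues j) / 2 with hμ
  obtain ⟨L, hL⟩ := hF μ
  set φ : S → ℝ := (hA.eigenvectorBasis i).ofLp with hφ
  set ψ : S → ℝ := (hA.eigenvectorBasis j).ofLp with hψ
  have hn : ∀ a b : ℝ, N2 (a • φ + b • ψ) ^ 2 = a ^ 2 + b ^ 2 := by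
    intro a b
    have e : N2 (a • φ + b • ψ) = ‖a • hA.eigenvectorBasis i + b • hA.eigenvectorBasis j‖ := rfl
    have h1 : ‖hA.eigenvectorBasis i‖ = 1 := hA.eigenvectorBasis.orthonormal.1 i
    have h2 : ‖hA.eigenvectorBasis j‖ = 1 := hA.eigenvectorBasis.orthonormal.1 j
    have h3 : inner ℝ (hA.eigenvectorBasis i) (hA.eigenvectorBasis j) = 0 :=
      hA.eigenvectorBasis.orthonormal.2 hij
    rw [e, norm_add_sq_real, norm_smul, norm_smul, h1, h2, inner_smul_left, inner_smul_right, h3]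
    simp
  obtain ⟨a, b, hab, hLab⟩ : ∃ a b : ℝ, 0 < a ^ 2 + b ^ 2 ∧ L (a • φ + b • ψ) = 0 := by
    by_cases h0 : L φ = 0
    · exact ⟨1, 0, by norm_num, by simp [h0]⟩
    · have hpos : 0 < (L φ) ^ 2 := by positivity
      refine ⟨L ψ, - L φ, by nlinarith [sq_nonneg (L ψ)], ?_⟩
      rw [map_add, map_smul, map_smul, smul_eq_mul, smul_eq_mul]; ring
  set w := a • φ + b • ψ with hw
  have h1 := hL w hLab
  have h2 := h w
  have e1 : A *ᵥ w - μ • w = (a * (hA.eigenvalues i - μ)) • φ + (b * (hA.eigenvalues j - μ)) • ψ := by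
    rw [hw, Matrix.mulVec_add, Matrix.mulVec_smul, Matrix.mulVec_smul, hφ, hψ,
      hA.mulVec_eigenvectorBasis, hA.mulVec_eigenvectorBasis]
    ext s
    simp only [Pi.add_apply, Pi.sub_apply, Pi.smul_apply, smul_eq_mul]
    ring
  have h3 : N2 (A *ᵥ w - μ • w) ≤ 0.5 * N2 w := by
    apply le_of_sq_le_sq _ (by have := N2_nonneg w; positivity)
    rw [e1, hn, mul_pow 0.5, hw, hn]
    have e2 : hA.eigenvalues i - μ = (hA.eigenvalues i - hA.eigenvalues j) / 2 := by rw [hμ]; ring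
    have e3 : hA.eigenvalues j - μ = -((hA.eigenvalues i - hA.eigenvalues j) / 2) := by
      rw [hμ]; ring
    rw [e2, e3]
    have h5 : (hA.eigenvalues i - hA.eigenvalues j) ^ 2 ≤ 1 := by
      rw [← sq_abs]
      have := abs_nonneg (hA.eigenvalues i - hA.eigenvalues j)
      nlinarith
    nlinarith
  have h4 : F w - μ • w = (A *ᵥ w - μ • w) - (A *ᵥ w - F w) := by abel
  have h5 := N2_sub (A *ᵥ w - μ • w) (A *ᵥ w - F w)
  rw [← h4] at h5
  have h6 : 0 < N2 w := by
    have := hn a b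
    rw [← hw] at this
    have h7 := N2_nonneg w
    rcases h7.eq_or_lt with h8 | h8
    · rw [← h8] at this; norm_num at this; linarith
    · exact h8
  norm_num at *
  linarith

lemma spacing_aux (k l : ℕ) (h : k < l) :
    1.2 ≤ Real.sqrt (1 + (2 * (l:ℝ)) ^ 2) - Real.sqrt (1 + (2 * (k:ℝ)) ^ 2) := by
  have hl : (k:ℝ) + 1 ≤ l := by exact_mod_cast h
  have hk : (0:ℝ) ≤ k := Nat.cast_nonneg k
  have h1 : Real.sqrt (1 + (2 * (k:ℝ)) ^ 2) ≤ 2 * k + 1 := by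
    rw [Real.sqrt_le_left (by positivity)]
    nlinarith
  have h0 := Real.sqrt_nonneg (1 + (2 * (k:ℝ)) ^ 2)
  have h2 : Real.sqrt (1 + (2 * (k:ℝ)) ^ 2) + 1.2 ≤ Real.sqrt (1 + (2 * (l:ℝ)) ^ 2) := by
    apply Real.le_sqrt_of_sq_le
    have := Real.sq_sqrt (show 0 ≤ 1 + (2 * (k:ℝ)) ^ 2 by positivity)
    nlinarith
  linarith


lemma final_arith (n : ℕ) (hn1 : 1 ≤ n) (δ : ℝ) (hδ0 : 0 < δ) :
    (2 * (2 * (n:ℝ)) ^ n) *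
      ((δ ^ 2 * 9 ^ (2 * n * (2 * n - 1) / 2 - 1)) ^ (1 / (4 * (n:ℝ) ^ 2)) *
        (1 + 2 / (1 - (1 - 1 / (2 * (n:ℝ)))))) ≤
    δ ^ (1 / (2 * (n : ℝ) ^ 2)) * (4 * (4 * n) ^ (n + 1)) := by
  have hnR : (1:ℝ) ≤ n := by exact_mod_cast hn1
  have hn0 : (0:ℝ) < n := by linarith
  have e1 : (δ ^ 2 * 9 ^ (2 * n * (2 * n - 1) / 2 - 1)) ^ (1 / (4 * (n:ℝ) ^ 2)) ≤
      δ ^ (1 / (2 * (n : ℝ) ^ 2)) * 3 := by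
    rw [Real.mul_rpow (by positivity) (by positivity), ← Real.rpow_natCast δ,
      ← Real.rpow_mul hδ0.le]
    have e2 : ((2:ℕ):ℝ) * (1 / (4 * (n:ℝ) ^ 2)) = 1 / (2 * (n : ℝ) ^ 2) := by
      push_cast; field_simp; norm_num
    rw [e2]
    gcongr
    have h9 : (9:ℝ) = (3:ℝ) ^ (2:ℝ) := by norm_num
    rw [← Real.rpow_natCast (9:ℝ), h9, ← Real.rpow_mul (by norm_num), ← Real.rpow_mul (by norm_num)]
    conv_rhs => rw [← Real.rpow_one 3]
    apply Real.rpow_le_rpow_of_exponent_le (by norm_num)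
    rw [← mul_assoc, mul_one_div, div_le_one (by positivity)]
    have : 2 * n * (2 * n - 1) / 2 - 1 ≤ 2 * n ^ 2 := by
      have : 2 * n * (2 * n - 1) / 2 = n * (2 * n - 1) := by
        rw [mul_assoc, Nat.mul_div_cancel_left _ (by norm_num)]
      rw [this]
      calc n * (2 * n - 1) - 1 ≤ n * (2 * n - 1) := Nat.sub_le _ _
        _ ≤ n * (2 * n) := Nat.mul_le_mul_left _ (Nat.sub_le _ _)
        _ = _ := by ring
    have h : ((2 * n * (2 * n - 1) / 2 - 1 : ℕ) : ℝ) ≤ 2 * (n:ℝ) ^ 2 := by exact_mod_cast this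
    linarith
  have e3 : 1 + 2 / (1 - (1 - 1 / (2 * (n:ℝ)))) = 1 + 4 * n := by
    rw [sub_sub_cancel]; field_simp; ring
  rw [e3]
  have hδp : 0 < δ ^ (1 / (2 * (n : ℝ) ^ 2)) := Real.rpow_pos_of_pos hδ0 _
  have h2n : (2:ℝ) ≤ 2 ^ n := by
    calc (2:ℝ) = 2 ^ 1 := by norm_num
      _ ≤ 2 ^ n := pow_le_pow_right₀ (by norm_num) hn1
  calc _ ≤ (2 * (2 * (n:ℝ)) ^ n) * ((δ ^ (1 / (2 * (n : ℝ) ^ 2)) * 3) * (1 + 4 * n)) := by gcongr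
    _ = δ ^ (1 / (2 * (n : ℝ) ^ 2)) * ((2 * (n:ℝ)) ^ n * (6 * (1 + 4 * n))) := by ring
    _ ≤ δ ^ (1 / (2 * (n : ℝ) ^ 2)) * ((2 * (n:ℝ)) ^ n * (16 * n * 2 ^ n)) := by
        apply mul_le_mul_of_nonneg_left _ hδp.le
        apply mul_le_mul_of_nonneg_left _ (by positivity)
        nlinarith
    _ = _ := by
        have : (4 * (n:ℝ)) ^ (n + 1) = (2 * (n:ℝ)) ^ n * 2 ^ n * (4 * n) := by
          rw [pow_succ, ← mul_pow]
          congr 2; ring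
        rw [this]; ring

lemma Ham_affine (d : ℕ) (γ : ℝ) (B : Finset (Fin d → ℤ)) (c v : {x // x ∈ B} → ℝ) (t : ℝ) :
    Ham d γ B (c + t • (v - c)) = Ham d γ B c + t • Matrix.diagonal (fun s : {x // x ∈ B} × Fin 2 =>
      if s.2 = 0 then v s.1 - c s.1 else -(v s.1 - c s.1)) := by
  ext s r
  rw [Matrix.add_apply, Matrix.smul_apply, Matrix.diagonal_apply]
  by_cases h : s = r
  · subst h
    simp only [Ham, if_true, Pi.add_apply, Pi.smul_apply, Pi.sub_apply, smul_eq_mul]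
    split_ifs <;> ring
  · rw [if_neg h, smul_zero, add_zero]
    unfold Ham
    by_cases h1 : s.1 = r.1
    · have h2 : s.2 ≠ r.2 := fun h2 => h (Prod.ext h1 h2)
      simp [h1, h2]
    · simp [h1]

lemma Ham_continuous (d : ℕ) (γ : ℝ) (B : Finset (Fin d → ℤ)) : Continuous (Ham d γ B) := by
  apply continuous_matrix
  intro s r
  unfold Ham
  split_ifs <;> fun_prop

/-- for `M(u) = H_B(u) + Ξ` with `Ξ` fixed symmetric, `‖Ξ‖ ≤ γ`,
`(2d+1)γ ≤ 1/100`, the probability that two eigenvalues of `M(u)` (counted with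
multiplicity) are within `δ` of each other is at most `δ^{1/(2n²)}·4·(4n)^{n+1}`. -/
theorem block_level_spacing (d : ℕ) (hd : 1 ≤ d) (γ : ℝ) (hγ : 0 < γ)
    (hγs : (2 * (d : ℝ) + 1) * γ ≤ 1 / 100)
    (B : Finset (Fin d → ℤ)) (n : ℕ) (hn : n = B.card)
    (Ξ : Matrix ({x // x ∈ B} × Fin 2) ({x // x ∈ B} × Fin 2) ℝ)
    (hΞh : Ξ.IsHermitian) (hΞ : opNorm Ξ ≤ γ)
    (hherm : ∀ u : {x // x ∈ B} → ℝ, (Ham d γ B u + Ξ).IsHermitian)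
    (δ : ℝ) (hδ0 : 0 < δ) (hδ1 : δ ≤ 1) :
    unifPi {x // x ∈ B}
        {u | ∃ i j : {x // x ∈ B} × Fin 2, i ≠ j ∧
          |(hherm u).eigenvalues i - (hherm u).eigenvalues j| < δ} ≤
      ENNReal.ofReal (δ ^ (1 / (2 * (n : ℝ) ^ 2)) * (4 * (4 * n) ^ (n + 1))) := by
  classical
  rcases Nat.eq_zero_or_pos n with hn0 | hn1
  · have hB : B = ∅ := by rw [← Finset.card_eq_zero]; omega
    have : {u : {x // x ∈ B} → ℝ | ∃ i j : {x // x ∈ B} × Fin 2, i ≠ j ∧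
          |(hherm u).eigenvalues i - (hherm u).eigenvalues j| < δ} = ∅ := by
      ext u
      simp only [Set.mem_ofPred_eq, Set.mem_empty_iff_false, iff_false]
      rintro ⟨i, _⟩
      exact (Finset.eq_empty_iff_forall_notMem.1 hB) i.1.1 i.1.2
    rw [this, measure_empty]
    exact zero_le
  have hnR : (1:ℝ) ≤ n := by exact_mod_cast hn1
  have hcard : n = Fintype.card {x // x ∈ B} := by simp [hn]
  -- the reference point
  let k : {x // x ∈ B} ≃ Fin n := Fintype.equivFinOfCardEq hcard.symm
  let e : Fin (2 * n) ≃ {x // x ∈ B} × Fin 2 :=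
    (Fintype.equivFinOfCardEq (by rw [Fintype.card_prod, ← hcard, Fintype.card_fin, mul_comm])).symm
  set c : {x // x ∈ B} → ℝ := fun x => 2 * ((k x : ℕ) : ℝ) with hc
  have hc0 : ∀ x, 0 ≤ c x := fun x => by positivity
  have hc1 : ∀ x, c x ≤ 2 * n - 2 := by
    intro x
    have : ((k x : ℕ) : ℝ) + 1 ≤ n := by exact_mod_cast (k x).2
    simp only [hc]
    linarith
  have hsp : ∀ x y, x ≠ y → 1.2 ≤ |Real.sqrt (1 + c x ^ 2) - Real.sqrt (1 + c y ^ 2)| := by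
    intro x y hxy
    have hne : (k x : ℕ) ≠ (k y : ℕ) := fun h => hxy (k.injective (Fin.ext h))
    rcases lt_or_gt_of_ne hne with h | h
    · rw [abs_sub_comm]
      exact (spacing_aux _ _ h).trans (le_abs_self _)
    · exact (spacing_aux _ _ h).trans (le_abs_self _)
  have hDc : 1 ≤ discM (2 * n) (Ham d γ B c + Ξ) := by
    apply discM_ge_one (hherm c) _ e
    intro i j hij
    exact eig_gap (hherm c) (H0 c) (pert_bound d γ hγ hγs B Ξ hΞ c) (H0_lower c hsp) i j hij
  -- the bad set
  set ε : ℝ := δ ^ 2 * 9 ^ (2 * n * (2 * n - 1) / 2 - 1) with hε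
  have hε0 : 0 < ε := by positivity
  set K : Set ({x // x ∈ B} → ℝ) := Set.univ.pi fun _ => Set.Icc (-1:ℝ) 1 with hK
  have hKm : MeasurableSet K := MeasurableSet.univ_pi fun _ => measurableSet_Icc
  set E : Set ({x // x ∈ B} → ℝ) := K ∩ {u | discM (2 * n) (Ham d γ B u + Ξ) ≤ ε} with hE
  have hEm : MeasurableSet E := by
    apply hKm.inter
    apply measurableSet_le _ measurable_const
    exact (discM_continuous _ _ ((Ham_continuous d γ B).add continuous_const)).measurable
  have hKc : unifPi {x // x ∈ B} Kᶜ = 0 := by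
    rw [unifPi_apply _ hKm.compl]
    simp [hK]
  have hbad : {u | ∃ i j : {x // x ∈ B} × Fin 2, i ≠ j ∧
          |(hherm u).eigenvalues i - (hherm u).eigenvalues j| < δ} ⊆ E ∪ Kᶜ := by
    intro u hu
    by_cases hu1 : u ∈ K
    · left
      refine ⟨hu1, ?_⟩
      apply discM_le (hherm u) _ e δ _ hu
      have hup : ∀ i, |(hherm u).eigenvalues i| ≤ 1.5 := by
        apply eig_upper
        intro w
        have h1 := pert_bound d γ hγ hγs B Ξ hΞ u w
        have h2 := H0_upper u (fun x => hu1 x (Set.mem_univ _)) w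
        have h3 := N2_add ((Ham d γ B u + Ξ) *ᵥ w - H0 u w) (H0 u w)
        rw [sub_add_cancel] at h3
        have h4 := N2_nonneg w
        norm_num at *
        linarith
      intro i j
      have h1 := hup i
      have h2 := hup j
      have h3 := abs_sub (hherm u |>.eigenvalues i) (hherm u |>.eigenvalues j)
      norm_num at *
      linarith
    · right; exact hu1
  -- lines
  have hb : ∀ v : {x // x ∈ B} → ℝ,
      volume {t : ℝ | t ∈ Set.Icc (1/2:ℝ) 1 ∧ c + t • (v - c) ∈ E} ≤
        ENNReal.ofReal (ε ^ (1 / (4 * (n:ℝ) ^ 2)) * (1 + 2 / (1 - (1 - 1 / (2 * (n:ℝ)))))) := by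
    intro v
    obtain ⟨Q, hQd, hQ⟩ := disc_poly (2 * n) (Ham d γ B c + Ξ)
      (Matrix.diagonal (fun s : {x // x ∈ B} × Fin 2 =>
        if s.2 = 0 then v s.1 - c s.1 else -(v s.1 - c s.1)))
    have hev : ∀ t : ℝ, (Q.map Complex.ofRealHom).eval (t : ℂ) = ((Q.eval t : ℝ) : ℂ) := by
      intro t
      have := Polynomial.eval_map_apply (f := Complex.ofRealHom) (p := Q) t
      simpa using this
    have hQt : ∀ t : ℝ, Q.eval t = discM (2 * n) (Ham d γ B (c + t • (v - c)) + Ξ) := by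
      intro t
      rw [hQ, Ham_affine]
      congr 1
      abel
    have hsmall : 1 / (2 * (n:ℝ)) ≤ 1 / 2 := by
      apply one_div_le_one_div_of_le <;> linarith
    have hpos : 0 < 1 / (2 * (n:ℝ)) := by positivity
    refine le_trans (measure_mono ?_) (poly_small (Q.map Complex.ofRealHom) ?_
      (1 / (4 * (n:ℝ) ^ 2)) (1 - 1 / (2 * (n:ℝ))) ε (by positivity) ?_ ?_ ?_ hε0)
    · rintro t ⟨ht, htE⟩
      refine ⟨ht, ?_⟩
      have h0 : 0 ≤ Q.eval t := by
        rw [hQt, discM_eq (hherm _) _ e]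
        exact Finset.prod_nonneg fun _ _ => by positivity
      rw [hev, Complex.norm_real, Real.norm_eq_abs, abs_of_nonneg h0, hQt]
      exact htE.2
    · have h0 := hev 0
      rw [Complex.ofReal_zero] at h0
      rw [h0, Complex.norm_real, hQt, zero_smul, add_zero]
      exact hDc.trans (le_abs_self _)
    · linarith
    · linarith
    · have h1 : (Q.map Complex.ofRealHom).natDegree ≤ 2 * n * (2 * n - 1) :=
        (Polynomial.natDegree_map_le).trans hQd
      have h2 : ((Q.map Complex.ofRealHom).natDegree : ℝ) ≤ 2 * n * (2 * n - 1) := by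
        have h3 : ((2 * n * (2 * n - 1) : ℕ) : ℝ) = 2 * n * (2 * n - 1) := by
          rw [Nat.cast_mul, Nat.cast_sub (by omega)]
          push_cast; ring
        rw [← h3]
        exact_mod_cast h1
      calc _ ≤ 1 / (4 * (n:ℝ) ^ 2) * (2 * n * (2 * n - 1)) := by gcongr
        _ = _ := by field_simp; ring
  have hmain := measure_part n hcard hn1 c hc0 hc1 E hEm Set.inter_subset_left _ hb
  calc _ ≤ unifPi {x // x ∈ B} (E ∪ Kᶜ) := measure_mono hbad
    _ ≤ unifPi {x // x ∈ B} E + unifPi {x // x ∈ B} Kᶜ := measure_union_le _ _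
    _ = unifPi {x // x ∈ B} E := by rw [hKc, add_zero]
    _ ≤ _ := hmain
    _ ≤ _ := by
      rw [← ENNReal.ofReal_mul (by positivity)]
      exact ENNReal.ofReal_le_ofReal (final_arith n hn1 δ hδ0)
end

section
/- There exist constants b > 0 and γ₀ > 0, depending only on the dimension d, such that for every 0 < γ ≤ γ₀ the following holds: for every 0 < δ ≤ γ^{1/4}, every finite rectangle Λ ⊂ ℤ^d, and every E ∈ ℝ, letting N(I) denote the number of eigenvalues of H(u), counted with multiplicity, lying in the interval I = [E − δ/2, E + δ/2], one has 𝔼 N(I) ≤ 4·|Λ|·exp(−b·|log γ|^{2/3}·|log δ|^{1/3}). -/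
open Matrix MeasureTheory

/-- The number of eigenvalues of `H(u)`, counted with multiplicity (i.e. real roots of
the characteristic polynomial with multiplicity), in `[E - δ/2, E + δ/2]`. -/
noncomputable def eigCount (d : ℕ) (γ : ℝ) (Λ : Finset (Fin d → ℤ))
    (u : {x // x ∈ Λ} → ℝ) (E δ : ℝ) : ℕ :=
  Multiset.card ((Ham d γ Λ u).charpoly.roots.filter
    (fun r => E - δ / 2 ≤ r ∧ r ≤ E + δ / 2))

/-! ### One-variable estimates -/

lemma inv_sqrt_lintegral_finite :
    ∃ C : NNReal, ∫⁻ v : ℝ, (Set.Icc (-1 : ℝ) 1).indicator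
      (fun v => (‖v‖ₑ⁻¹) ^ ((1 : ℝ) / 2)) v ≤ C := by
  set g : ℝ → ENNReal := (Set.Ioc (0 : ℝ) 1).indicator (fun v => ‖v ^ (-(1 : ℝ) / 2)‖ₑ) with hg
  have hgm : Measurable g := by
    apply Measurable.indicator _ measurableSet_Ioc
    fun_prop
  have hgfin : ∫⁻ v, g v < ⊤ := by
    rw [hg, lintegral_indicator measurableSet_Ioc]
    have h : IntervalIntegrable (fun x : ℝ => x ^ (-(1 : ℝ) / 2)) volume 0 1 :=
      intervalIntegral.intervalIntegrable_rpow' (by norm_num)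
    rw [intervalIntegrable_iff_integrableOn_Ioc_of_le zero_le_one] at h
    exact h.2
  have hneg : ∫⁻ v, g (-v) = ∫⁻ v, g v := lintegral_neg_eq_self g
  have hae : ∀ᵐ v : ℝ, v ≠ 0 := by
    simp [ae_iff]
  have hle : ∫⁻ v : ℝ, (Set.Icc (-1 : ℝ) 1).indicator
      (fun v => (‖v‖ₑ⁻¹) ^ ((1 : ℝ) / 2)) v ≤ ∫⁻ v, (g v + g (-v)) := by
    apply lintegral_mono_ae
    filter_upwards [hae] with v hv
    by_cases hm : v ∈ Set.Icc (-1 : ℝ) 1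
    · rw [Set.indicator_of_mem hm]
      have key : ∀ w : ℝ, 0 < w → w ≤ 1 → (‖w‖ₑ⁻¹) ^ ((1 : ℝ) / 2) = g w := by
        intro w hw hw1
        rw [hg, Set.indicator_of_mem (Set.mem_Ioc.2 ⟨hw, hw1⟩)]
        rw [ENNReal.inv_rpow, ← ENNReal.rpow_neg, Real.enorm_eq_ofReal hw.le,
          Real.enorm_eq_ofReal (Real.rpow_nonneg hw.le _), ENNReal.ofReal_rpow_of_pos hw]
        norm_num
      rcases lt_or_gt_of_ne hv with h | h
      · have := key (-v) (by linarith) (by linarith [hm.1])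
        rw [enorm_neg] at this
        rw [this]; exact le_add_self
      · rw [key v h hm.2]; exact le_self_add
    · rw [Set.indicator_of_notMem hm]; exact zero_le
  rw [lintegral_add_left hgm, hneg] at hle
  refine ⟨((∫⁻ v, g v) + ∫⁻ v, g v).toNNReal, ?_⟩
  rw [ENNReal.coe_toNNReal (ENNReal.add_ne_top.2 ⟨hgfin.ne, hgfin.ne⟩)]
  exact hle

lemma unif_le : unif ≤ volume.restrict (Set.Icc (-1 : ℝ) 1) := by
  rw [unif]
  intro s
  rw [Measure.smul_apply, ENNReal.smul_def, smul_eq_mul]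
  refine mul_le_of_le_one_left (zero_le) ?_
  rw [ENNReal.coe_le_one_iff]
  exact inv_le_one_of_one_le₀ (by norm_num)

lemma unif_ae : ∀ᵐ u ∂unif, u ∈ Set.Icc (-1 : ℝ) 1 := by
  have h : ∀ᵐ u ∂(volume.restrict (Set.Icc (-1 : ℝ) 1)), u ∈ Set.Icc (-1 : ℝ) 1 :=
    ae_restrict_mem measurableSet_Icc
  exact (Measure.absolutelyContinuous_of_le unif_le).ae_le h

lemma unif_shift : ∃ C : NNReal, ∀ a : ℝ,
    ∫⁻ u, (‖u - a‖ₑ⁻¹) ^ ((1 : ℝ) / 2) ∂unif ≤ C := by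
  obtain ⟨C, hC⟩ := inv_sqrt_lintegral_finite
  refine ⟨C + 1, fun a => ?_⟩
  set f : ℝ → ENNReal := (Set.Icc (-1 : ℝ) 1).indicator
      (fun v => (‖v‖ₑ⁻¹) ^ ((1 : ℝ) / 2)) with hf
  have hpt : ∀ u : ℝ, (‖u - a‖ₑ⁻¹) ^ ((1 : ℝ) / 2) ≤ f (u - a) + 1 := by
    intro u
    by_cases hm : u - a ∈ Set.Icc (-1 : ℝ) 1
    · rw [hf, Set.indicator_of_mem hm]; exact le_self_add
    · have h1 : (1 : ENNReal) ≤ ‖u - a‖ₑ := by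
        rw [Real.enorm_eq_ofReal_abs, ENNReal.one_le_ofReal]
        by_contra h
        exact hm (abs_le.1 (not_le.1 h).le)
      have h2 : (‖u - a‖ₑ⁻¹) ^ ((1 : ℝ) / 2) ≤ 1 :=
        ENNReal.rpow_le_one (ENNReal.inv_le_one.2 h1) (by norm_num)
      exact h2.trans le_add_self
  calc ∫⁻ u, (‖u - a‖ₑ⁻¹) ^ ((1 : ℝ) / 2) ∂unif
      ≤ ∫⁻ u, (f (u - a) + 1) ∂unif := lintegral_mono hpt
    _ = (∫⁻ u, f (u - a) ∂unif) + 1 := by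
        rw [lintegral_add_right _ measurable_const]; simp
    _ ≤ (∫⁻ u, f (u - a)) + 1 := by
        gcongr
        exact unif_le.trans Measure.restrict_le_self
    _ = (∫⁻ u, f u) + 1 := by rw [lintegral_sub_right_eq_self f a]
    _ ≤ _ := by push_cast; gcongr

lemma linear_lower (v w : ℂ) : ∃ a : ℝ, ∀ u ∈ Set.Icc (-1 : ℝ) 1,
    (‖v‖ + ‖w‖) * min 1 |u - a| ≤ 3 * ‖v * u + w‖ := by
  by_cases h : 2 * ‖v‖ ≤ ‖w‖
  · refine ⟨0, fun u hu => ?_⟩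
    have h1 : ‖v * u‖ ≤ ‖v‖ := by
      rw [norm_mul, Complex.norm_real, Real.norm_eq_abs]
      exact mul_le_of_le_one_right (norm_nonneg _) (abs_le.2 hu)
    have h2 : ‖w‖ ≤ ‖v * u + w‖ + ‖v * u‖ := by
      calc ‖w‖ = ‖(v * u + w) - v * u‖ := by ring_nf
        _ ≤ _ := norm_sub_le _ _
    have h3 : (‖v‖ + ‖w‖) * min 1 |u - 0| ≤ (‖v‖ + ‖w‖) * 1 := by
      gcongr; exact min_le_left _ _
    nlinarith [norm_nonneg v, norm_nonneg w]
  · push Not at h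
    have hv : v ≠ 0 := by
      rintro rfl
      simp at h
      linarith [norm_nonneg w]
    refine ⟨(-w / v).re, fun u hu => ?_⟩
    have h1 : ‖v * u + w‖ = ‖v‖ * ‖(u : ℂ) - (-w / v)‖ := by
      rw [← norm_mul]; congr 1; field_simp; ring
    have h2 : |u - (-w / v).re| ≤ ‖(u : ℂ) - (-w / v)‖ := by
      have := Complex.abs_re_le_norm ((u : ℂ) - (-w / v))
      simpa using this
    calc (‖v‖ + ‖w‖) * min 1 |u - (-w / v).re|
        ≤ (3 * ‖v‖) * ‖(u : ℂ) - (-w / v)‖ := by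
          have : min 1 |u - (-w / v).re| ≤ ‖(u : ℂ) - (-w / v)‖ := (min_le_right _ _).trans h2
          gcongr
          linarith
      _ = _ := by rw [h1]; ring

lemma linear_moment : ∃ C : NNReal, ∀ v w : ℂ,
    ∫⁻ u : ℝ, ((‖v‖ₑ + ‖w‖ₑ) / ‖v * u + w‖ₑ) ^ ((1 : ℝ) / 2) ∂unif ≤ C := by
  obtain ⟨C, hC⟩ := unif_shift
  refine ⟨3 * (1 + C), fun v w => ?_⟩
  obtain ⟨a, ha⟩ := linear_lower v w
  have hpt : ∀ᵐ u : ℝ ∂unif, ((‖v‖ₑ + ‖w‖ₑ) / ‖v * u + w‖ₑ) ^ ((1 : ℝ) / 2)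
      ≤ 3 * (1 + (‖u - a‖ₑ⁻¹) ^ ((1 : ℝ) / 2)) := by
    filter_upwards [unif_ae] with u hu
    have h1 : (‖v‖ₑ + ‖w‖ₑ) * min 1 ‖u - a‖ₑ ≤ 3 * ‖v * u + w‖ₑ := by
      have := ENNReal.ofReal_le_ofReal (ha u hu)
      rw [ENNReal.ofReal_mul (by positivity), ENNReal.ofReal_mul (by positivity),
        ENNReal.ofReal_add (norm_nonneg _) (norm_nonneg _), ENNReal.ofReal_min,
        ofReal_norm, ofReal_norm, ofReal_norm, ← Real.enorm_eq_ofReal_abs] at this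
      simpa using this
    have h2 : (‖v‖ₑ + ‖w‖ₑ) / ‖v * u + w‖ₑ ≤ 3 / min 1 ‖u - a‖ₑ := by
      rw [ENNReal.le_div_iff_mul_le (Or.inr (by norm_num)) (Or.inr (by norm_num))]
      rw [mul_comm, ← mul_div_assoc, mul_comm (min _ _)]
      exact ENNReal.div_le_of_le_mul h1
    calc _ ≤ (3 / min 1 ‖u - a‖ₑ) ^ ((1 : ℝ) / 2) := ENNReal.rpow_le_rpow h2 (by norm_num)
      _ = 3 ^ ((1 : ℝ) / 2) * ((min 1 ‖u - a‖ₑ)⁻¹) ^ ((1 : ℝ) / 2) := by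
          rw [div_eq_mul_inv, ENNReal.mul_rpow_of_nonneg _ _ (by norm_num)]
      _ ≤ 3 * (1 + (‖u - a‖ₑ⁻¹) ^ ((1 : ℝ) / 2)) := by
          gcongr
          · calc (3 : ENNReal) ^ ((1 : ℝ) / 2) ≤ 3 ^ (1 : ℝ) :=
                ENNReal.rpow_le_rpow_of_exponent_le (by norm_num) (by norm_num)
              _ = 3 := by simp
          · rcases le_total 1 ‖u - a‖ₑ with h | h
            · rw [min_eq_left h]; simp
            · rw [min_eq_right h]; exact le_add_self
  calc _ ≤ ∫⁻ u, 3 * (1 + (‖u - a‖ₑ⁻¹) ^ ((1 : ℝ) / 2)) ∂unif := lintegral_mono_ae hpt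
    _ = 3 * (1 + ∫⁻ u, (‖u - a‖ₑ⁻¹) ^ ((1 : ℝ) / 2) ∂unif) := by
        rw [lintegral_const_mul _ (by fun_prop), lintegral_add_left measurable_const]; simp
    _ ≤ _ := by push_cast; gcongr; exact hC a

/-- Complex quadratic polynomial evaluated at a real point. -/
noncomputable def qp (c : Fin 3 → ℂ) (u : ℝ) : ℂ := c 0 + c 1 * u + c 2 * u ^ 2

/-- Size of the coefficients. -/
noncomputable def qs (c : Fin 3 → ℂ) : ENNReal := ‖c 0‖ₑ + ‖c 1‖ₑ + ‖c 2‖ₑ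

lemma measurable_qp (c : Fin 3 → ℂ) : Measurable (qp c) := by
  unfold qp; fun_prop

lemma qs_ne_top (c : Fin 3 → ℂ) : qs c ≠ ⊤ := by simp [qs]

lemma qp_le (c : Fin 3 → ℂ) {u : ℝ} (hu : u ∈ Set.Icc (-1 : ℝ) 1) : ‖qp c u‖ₑ ≤ qs c := by
  have hu1 : ‖(u : ℂ)‖ₑ ≤ 1 := by
    rw [← ofReal_norm, Complex.norm_real, Real.norm_eq_abs]
    exact ENNReal.ofReal_le_one.2 (abs_le.2 hu)
  unfold qp qs
  calc _ ≤ ‖c 0‖ₑ + ‖c 1 * u‖ₑ + ‖c 2 * u ^ 2‖ₑ :=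
        (enorm_add_le _ _).trans (by gcongr; exact enorm_add_le _ _)
    _ ≤ _ := by
        rw [enorm_mul, enorm_mul, enorm_pow]
        gcongr
        · exact mul_le_of_le_one_right (zero_le) hu1
        · exact mul_le_of_le_one_right (zero_le) (pow_le_one₀ zero_le hu1)

lemma quad_factor (c : Fin 3 → ℂ) : ∃ v₁ w₁ v₂ w₂ : ℂ,
    c 0 = w₁ * w₂ ∧ c 1 = v₁ * w₂ + w₁ * v₂ ∧ c 2 = v₁ * v₂ := by
  by_cases h : c 2 = 0
  · exact ⟨0, 1, c 1, c 0, by simp, by simp, by simp [h]⟩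
  · obtain ⟨s, hs⟩ := IsAlgClosed.exists_pow_nat_eq (discrim (c 2) (c 1) (c 0)) two_pos
    obtain ⟨x, hx⟩ := exists_quadratic_eq_zero h ⟨s, by rw [← hs]; ring⟩
    refine ⟨1, -x, c 2, c 1 + c 2 * x, ?_, ?_, ?_⟩
    · linear_combination hx
    · ring
    · ring

lemma rpow_quarter_mul_le (x y : ENNReal) :
    (x * y) ^ ((1 : ℝ) / 4) ≤ x ^ ((1 : ℝ) / 2) + y ^ ((1 : ℝ) / 2) := by
  have key : ∀ x y : ENNReal, x ≤ y → (x * y) ^ ((1 : ℝ) / 4) ≤ y ^ ((1 : ℝ) / 2) := by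
    intro x y h
    calc (x * y) ^ ((1 : ℝ) / 4) ≤ (y * y) ^ ((1 : ℝ) / 4) := by gcongr
      _ = y ^ ((1 : ℝ) / 2) := by
        rw [← pow_two, ← ENNReal.rpow_natCast, ← ENNReal.rpow_mul]; norm_num
  rcases le_total x y with h | h
  · exact (key x y h).trans le_add_self
  · rw [mul_comm]; exact (key y x h).trans le_self_add

lemma quad_moment : ∃ C : NNReal, 1 ≤ C ∧ ∀ c : Fin 3 → ℂ,
    ∫⁻ u : ℝ, (qs c / ‖qp c u‖ₑ) ^ ((1 : ℝ) / 4) ∂unif ≤ C := by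
  obtain ⟨C, hC⟩ := linear_moment
  refine ⟨C + C + 1, le_add_self, fun c => ?_⟩
  obtain ⟨v₁, w₁, v₂, w₂, h0, h1, h2⟩ := quad_factor c
  have hs : qs c ≤ (‖v₁‖ₑ + ‖w₁‖ₑ) * (‖v₂‖ₑ + ‖w₂‖ₑ) := by
    unfold qs
    rw [h0, h1, h2]
    calc _ ≤ ‖w₁ * w₂‖ₑ + (‖v₁ * w₂‖ₑ + ‖w₁ * v₂‖ₑ) + ‖v₁ * v₂‖ₑ := by
          gcongr; exact enorm_add_le _ _
      _ = _ := by simp only [enorm_mul]; ring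
  have hq : ∀ u : ℝ, qp c u = (v₁ * u + w₁) * (v₂ * u + w₂) := by
    intro u; unfold qp; rw [h0, h1, h2]; ring
  have hpt : ∀ u : ℝ, (qs c / ‖qp c u‖ₑ) ^ ((1 : ℝ) / 4) ≤
      ((‖v₁‖ₑ + ‖w₁‖ₑ) / ‖v₁ * u + w₁‖ₑ) ^ ((1 : ℝ) / 2) +
      ((‖v₂‖ₑ + ‖w₂‖ₑ) / ‖v₂ * u + w₂‖ₑ) ^ ((1 : ℝ) / 2) := by
    intro u
    refine le_trans ?_ (rpow_quarter_mul_le _ _)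
    gcongr
    rw [hq, enorm_mul, div_eq_mul_inv, ENNReal.mul_inv (Or.inr enorm_ne_top) (Or.inl enorm_ne_top)]
    calc _ ≤ ((‖v₁‖ₑ + ‖w₁‖ₑ) * (‖v₂‖ₑ + ‖w₂‖ₑ)) * (‖v₁ * u + w₁‖ₑ⁻¹ * ‖v₂ * u + w₂‖ₑ⁻¹) := by
          gcongr
      _ = _ := by rw [div_eq_mul_inv, div_eq_mul_inv]; ring
  calc _ ≤ _ := lintegral_mono hpt
    _ = _ := lintegral_add_left (by fun_prop) _
    _ ≤ C + C := add_le_add (hC _ _) (hC _ _)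
    _ ≤ _ := by push_cast; exact le_self_add

lemma rpow_eighth_mul_le (x y : ENNReal) :
    x ^ ((1 : ℝ) / 8) * y ^ ((1 : ℝ) / 8) ≤ x ^ ((1 : ℝ) / 4) + y ^ ((1 : ℝ) / 4) := by
  have key : ∀ x y : ENNReal, x ≤ y →
      x ^ ((1 : ℝ) / 8) * y ^ ((1 : ℝ) / 8) ≤ y ^ ((1 : ℝ) / 4) := by
    intro x y h
    calc _ ≤ y ^ ((1 : ℝ) / 8) * y ^ ((1 : ℝ) / 8) := by gcongr
      _ = y ^ ((1 : ℝ) / 4) := by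
        rw [← ENNReal.rpow_add_of_nonneg _ _ (by norm_num) (by norm_num)]; norm_num
  rcases le_total x y with h | h
  · exact (key x y h).trans le_add_self
  · rw [mul_comm]; exact (key y x h).trans le_self_add

lemma quad_moment' : ∃ C : NNReal, 1 ≤ C ∧ ∀ c : Fin 3 → ℂ,
    ∫⁻ u : ℝ, (qs c / ‖qp c u‖ₑ) ^ ((1 : ℝ) / 8) ∂unif ≤ C := by
  obtain ⟨C, hC1, hC⟩ := quad_moment
  refine ⟨C + 1, le_add_self, fun c => ?_⟩
  have hpt : ∀ u : ℝ, (qs c / ‖qp c u‖ₑ) ^ ((1 : ℝ) / 8) ≤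
      (qs c / ‖qp c u‖ₑ) ^ ((1 : ℝ) / 4) + 1 := by
    intro u
    have := rpow_eighth_mul_le (qs c / ‖qp c u‖ₑ) 1
    simpa using this
  calc _ ≤ _ := lintegral_mono hpt
    _ = _ := lintegral_add_right _ measurable_const
    _ ≤ _ := by push_cast; simp only [lintegral_one, measure_univ]; gcongr; exact hC c

lemma quad_lower : ∃ k : NNReal, 0 < k ∧ ∀ c : Fin 3 → ℂ,
    k * qs c ^ ((1 : ℝ) / 8) ≤ ∫⁻ u : ℝ, ‖qp c u‖ₑ ^ ((1 : ℝ) / 8) ∂unif := by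
  obtain ⟨C, hC1, hC⟩ := quad_moment'
  have hC0 : 0 < C := lt_of_lt_of_le one_pos hC1
  refine ⟨1 / (4 * C), by positivity, fun c => ?_⟩
  by_cases hs : qs c = 0
  · rw [hs]; simp
  set I := ∫⁻ u : ℝ, (‖qp c u‖ₑ / qs c) ^ ((1 : ℝ) / 8) ∂unif with hI
  set k : NNReal := 1 / (2 * C) with hk
  have hk0 : 0 < k := by positivity
  have hpt : ∀ u : ℝ, (k : ENNReal) ≤ (‖qp c u‖ₑ / qs c) ^ ((1 : ℝ) / 8) +
      k ^ 2 * (qs c / ‖qp c u‖ₑ) ^ ((1 : ℝ) / 8) := by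
    intro u
    have hinv : (qs c / ‖qp c u‖ₑ) ^ ((1 : ℝ) / 8) = ((‖qp c u‖ₑ / qs c) ^ ((1 : ℝ) / 8))⁻¹ := by
      rw [← ENNReal.inv_rpow, ENNReal.inv_div (Or.inl (qs_ne_top c)) (Or.inl hs)]
    rw [hinv]
    set y := (‖qp c u‖ₑ / qs c) ^ ((1 : ℝ) / 8)
    rcases le_total (k : ENNReal) y with h | h
    · exact h.trans le_self_add
    · refine le_trans ?_ le_add_self
      calc (k : ENNReal) = k ^ 2 * (k : ENNReal)⁻¹ := by
            rw [pow_two, mul_assoc, ENNReal.mul_inv_cancel (by simpa using hk0.ne') (by simp),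
              mul_one]
        _ ≤ _ := by gcongr
  have h1 : (k : ENNReal) ≤ I + k ^ 2 * C := by
    calc (k : ENNReal) = ∫⁻ u : ℝ, (k : ENNReal) ∂unif := by simp
      _ ≤ _ := lintegral_mono hpt
      _ = I + k ^ 2 * ∫⁻ u : ℝ, (qs c / ‖qp c u‖ₑ) ^ ((1 : ℝ) / 8) ∂unif := by
          have hm := measurable_qp c
          rw [lintegral_add_left (by fun_prop), lintegral_const_mul _ (by fun_prop)]
      _ ≤ _ := by gcongr; exact hC c
  have h2 : ((1 / (4 * C) : NNReal) : ENNReal) ≤ I := by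
    have h3 : (k : ENNReal) ^ 2 * C = ((1 / (4 * C) : NNReal) : ENNReal) := by
      norm_cast
      rw [hk]; field_simp; norm_num
    have h4 : (k : ENNReal) = ((1 / (4 * C) : NNReal) : ENNReal) + ((1 / (4 * C) : NNReal) : ENNReal) := by
      norm_cast
      rw [hk]; field_simp; norm_num
    rw [h3, h4] at h1
    exact (ENNReal.add_le_add_iff_right ENNReal.coe_ne_top).1 h1
  calc _ ≤ I * qs c ^ ((1 : ℝ) / 8) := by gcongr
    _ = ∫⁻ u : ℝ, (‖qp c u‖ₑ / qs c) ^ ((1 : ℝ) / 8) * qs c ^ ((1 : ℝ) / 8) ∂unif := by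
        have hm := measurable_qp c
        rw [lintegral_mul_const _ (by fun_prop)]
    _ = _ := by
        congr 1; ext u
        rw [← ENNReal.mul_rpow_of_nonneg _ _ (by norm_num),
          ENNReal.div_mul_cancel hs (qs_ne_top c)]

/-- The decoupling estimate. -/
lemma decouple : ∃ C : NNReal, 1 ≤ C ∧ ∀ e p q : Fin 3 → ℂ, qs q ≠ 0 →
    ∫⁻ u : ℝ, (qs e / ‖qp e u‖ₑ) ^ ((1 : ℝ) / 8) * (‖qp p u‖ₑ / ‖qp q u‖ₑ) ^ ((1 : ℝ) / 8) ∂unif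
      ≤ C * ∫⁻ u : ℝ, (‖qp p u‖ₑ / ‖qp q u‖ₑ) ^ ((1 : ℝ) / 8) ∂unif := by
  obtain ⟨C, hC1, hC⟩ := quad_moment
  obtain ⟨k, hk0, hk⟩ := quad_lower
  refine ⟨(C + C) / k + 1, le_add_self, fun e p q hq => ?_⟩
  have hme := measurable_qp e
  have hmp := measurable_qp p
  have hmq := measurable_qp q
  have hqt := qs_ne_top q
  set A := (qs p / qs q) ^ ((1 : ℝ) / 8) with hA
  have hup : ∫⁻ u : ℝ, (qs e / ‖qp e u‖ₑ) ^ ((1 : ℝ) / 8) *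
      (‖qp p u‖ₑ / ‖qp q u‖ₑ) ^ ((1 : ℝ) / 8) ∂unif ≤ A * (C + C) := by
    calc _ ≤ ∫⁻ u : ℝ, A * ((qs e / ‖qp e u‖ₑ) ^ ((1 : ℝ) / 4) +
              (qs q / ‖qp q u‖ₑ) ^ ((1 : ℝ) / 4)) ∂unif := by
          apply lintegral_mono_ae
          filter_upwards [unif_ae] with u hu
          calc _ ≤ (qs e / ‖qp e u‖ₑ) ^ ((1 : ℝ) / 8) *
                ((qs p / qs q) * (qs q / ‖qp q u‖ₑ)) ^ ((1 : ℝ) / 8) := by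
                gcongr
                calc _ ≤ qs p / ‖qp q u‖ₑ := by gcongr; exact qp_le p hu
                  _ = qs p / qs q * qs q / ‖qp q u‖ₑ := by rw [ENNReal.div_mul_cancel hq hqt]
                  _ = _ := by rw [mul_div_assoc]
            _ = A * ((qs e / ‖qp e u‖ₑ) ^ ((1 : ℝ) / 8) * (qs q / ‖qp q u‖ₑ) ^ ((1 : ℝ) / 8)) := by
                rw [ENNReal.mul_rpow_of_nonneg _ _ (by norm_num)]; ring
            _ ≤ _ := by gcongr; exact rpow_eighth_mul_le _ _
      _ = A * (∫⁻ u : ℝ, (qs e / ‖qp e u‖ₑ) ^ ((1 : ℝ) / 4) ∂unif +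
              ∫⁻ u : ℝ, (qs q / ‖qp q u‖ₑ) ^ ((1 : ℝ) / 4) ∂unif) := by
          rw [lintegral_const_mul _ (by fun_prop), lintegral_add_left (by fun_prop)]
      _ ≤ _ := by gcongr; exacts [hC e, hC q]
  have hlow : k * A ≤ ∫⁻ u : ℝ, (‖qp p u‖ₑ / ‖qp q u‖ₑ) ^ ((1 : ℝ) / 8) ∂unif := by
    calc k * A = (k * qs p ^ ((1 : ℝ) / 8)) * ((qs q)⁻¹) ^ ((1 : ℝ) / 8) := by
          rw [hA, div_eq_mul_inv, ENNReal.mul_rpow_of_nonneg _ _ (by norm_num)]; ring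
      _ ≤ (∫⁻ u : ℝ, ‖qp p u‖ₑ ^ ((1 : ℝ) / 8) ∂unif) * ((qs q)⁻¹) ^ ((1 : ℝ) / 8) := by
          gcongr; exact hk p
      _ = ∫⁻ u : ℝ, ‖qp p u‖ₑ ^ ((1 : ℝ) / 8) * ((qs q)⁻¹) ^ ((1 : ℝ) / 8) ∂unif := by
          rw [lintegral_mul_const _ (by fun_prop)]
      _ ≤ _ := by
          apply lintegral_mono_ae
          filter_upwards [unif_ae] with u hu
          rw [← ENNReal.mul_rpow_of_nonneg _ _ (by norm_num), ← div_eq_mul_inv]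
          gcongr
          exact qp_le q hu
  calc _ ≤ A * (C + C) := hup
    _ = (((C + C) / k : NNReal) : ENNReal) * (k * A) := by
        rw [← mul_assoc, ← ENNReal.coe_mul, div_mul_cancel₀ _ hk0.ne', mul_comm]; push_cast; rfl
    _ ≤ ((((C + C) / k + 1 : NNReal)) : ENNReal) * (k * A) := by
        gcongr; exact le_self_add
    _ ≤ _ := by gcongr
/-! ### Spectral facts -/

lemma resolvent_facts {n : Type*} [Fintype n] [DecidableEq n] (A : Matrix n n ℝ)
    (hA : A.IsHermitian) (E η : ℝ) (hη : 0 < η) (B : Matrix n n ℂ)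
    (hB : B = A.map (fun x : ℝ => (x : ℂ)) - (⟨E, η⟩ : ℂ) • (1 : Matrix n n ℂ)) :
    B.det ≠ 0 ∧ (∀ s t, ‖B⁻¹ s t‖ ≤ Fintype.card n / η) ∧
    (∀ s, η * ‖B⁻¹ s s‖ ≤ 1) ∧
    (Multiset.card (A.charpoly.roots.filter (fun r => E - η ≤ r ∧ r ≤ E + η)) : ℝ) ≤
      ∑ s, 2 * (η * ‖B⁻¹ s s‖) := by
  set z : ℂ := ⟨E, η⟩ with hz
  set U : Matrix n n ℝ := (hA.eigenvectorUnitary : Matrix n n ℝ) with hU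
  set l := hA.eigenvalues with hl
  have hUU : U * Uᵀ = 1 := by
    have := Unitary.mul_star_self_of_mem hA.eigenvectorUnitary.2
    simpa [star_eq_conjTranspose, conjTranspose_eq_transpose_of_trivial] using this
  have hUU' : Uᵀ * U = 1 := mul_eq_one_comm.1 hUU
  have hspec : A = U * diagonal l * Uᵀ := by
    have := hA.spectral_theorem
    rw [Unitary.conjStarAlgAut_apply] at this
    simpa [star_eq_conjTranspose, conjTranspose_eq_transpose_of_trivial] using this
  set Uc : Matrix n n ℂ := U.map (fun x : ℝ => (x : ℂ)) with hUc
  have hmapmul : ∀ M N : Matrix n n ℝ, (M * N).map (fun x : ℝ => (x : ℂ)) =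
      M.map (fun x : ℝ => (x : ℂ)) * N.map (fun x : ℝ => (x : ℂ)) := by
    intro M N; exact Matrix.map_mul (f := Complex.ofRealHom)
  have hone : (1 : Matrix n n ℝ).map (fun x : ℝ => (x : ℂ)) = 1 :=
    Matrix.map_one _ (by simp) (by simp)
  have hc1 : Uc * Ucᵀ = 1 := by
    rw [hUc, ← transpose_map, ← hmapmul, hUU, hone]
  have hc2 : Ucᵀ * Uc = 1 := mul_eq_one_comm.1 hc1
  have hBs : B = Uc * diagonal (fun k => (l k : ℂ) - z) * Ucᵀ := by
    have h1 : diagonal (fun k => (l k : ℂ) - z) = diagonal (fun k => (l k : ℂ)) - z • 1 := by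
      ext i j
      by_cases h : i = j
      · subst h; simp
      · simp [h]
    rw [h1, mul_sub, sub_mul, mul_smul_comm, smul_mul_assoc, mul_one, hc1, hB, hspec, hmapmul,
      hmapmul, transpose_map]
    congr 3
    exact Matrix.diagonal_map (by simp)
  have hne : ∀ k, (l k : ℂ) - z ≠ 0 := by
    intro k h
    have := congrArg Complex.im h
    simp [hz] at this
    exact hη.ne' this
  have hinv : B * (Uc * diagonal (fun k => ((l k : ℂ) - z)⁻¹) * Ucᵀ) = 1 := by
    have h2 : diagonal (fun k => (l k : ℂ) - z) * diagonal (fun k => ((l k : ℂ) - z)⁻¹) = 1 := by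
      rw [diagonal_mul_diagonal, ← diagonal_one]
      congr 1; ext k; exact mul_inv_cancel₀ (hne k)
    calc _ = Uc * diagonal (fun k => (l k : ℂ) - z) * (Ucᵀ * Uc) *
          diagonal (fun k => ((l k : ℂ) - z)⁻¹) * Ucᵀ := by
          rw [hBs]; simp only [Matrix.mul_assoc]
      _ = Uc * (diagonal (fun k => (l k : ℂ) - z) * diagonal (fun k => ((l k : ℂ) - z)⁻¹)) * Ucᵀ := by
          rw [hc2, mul_one]; simp only [Matrix.mul_assoc]
      _ = 1 := by rw [h2, mul_one, hc1]
  have hBinv : B⁻¹ = Uc * diagonal (fun k => ((l k : ℂ) - z)⁻¹) * Ucᵀ := Matrix.inv_eq_right_inv hinv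
  have hent : ∀ s t, B⁻¹ s t = ∑ k, (U s k : ℂ) * (U t k : ℂ) * ((l k : ℂ) - z)⁻¹ := by
    intro s t
    rw [hBinv, Matrix.mul_apply]
    refine Finset.sum_congr rfl fun k _ => ?_
    rw [Matrix.mul_diagonal, Matrix.transpose_apply]
    simp only [hUc, Matrix.map_apply]; ring
  have hrow : ∀ s, ∑ k, U s k ^ 2 = 1 := by
    intro s
    have := congrFun (congrFun hUU s) s
    rw [Matrix.mul_apply, Matrix.one_apply_eq] at this
    rw [← this]
    exact Finset.sum_congr rfl fun k _ => by rw [Matrix.transpose_apply]; ring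
  have hcol : ∀ k, ∑ s, U s k ^ 2 = 1 := by
    intro s
    have := congrFun (congrFun hUU' s) s
    rw [Matrix.mul_apply, Matrix.one_apply_eq] at this
    rw [← this]
    exact Finset.sum_congr rfl fun k _ => by rw [Matrix.transpose_apply]; ring
  have hle1 : ∀ s k, |U s k| ≤ 1 := by
    intro s k
    rw [← sq_le_one_iff_abs_le_one, ← hrow s]
    exact Finset.single_le_sum (f := fun k => U s k ^ 2) (fun i _ => sq_nonneg _) (Finset.mem_univ k)
  have hinvle : ∀ k, ‖((l k : ℂ) - z)⁻¹‖ ≤ 1 / η := by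
    intro k
    rw [norm_inv, ← one_div]
    apply one_div_le_one_div_of_le hη
    have := Complex.abs_im_le_norm ((l k : ℂ) - z)
    simp only [hz, Complex.sub_im, Complex.ofReal_im, zero_sub, abs_neg] at this
    exact (le_abs_self η).trans this
  refine ⟨?_, ?_, ?_, ?_⟩
  · intro h
    have := congrArg Matrix.det hinv
    rw [Matrix.det_mul, h] at this
    simp at this
  · intro s t
    rw [hent]
    calc _ ≤ ∑ k : n, 1 / η := by
          refine norm_sum_le_of_le _ fun k _ => ?_
          rw [norm_mul, norm_mul, Complex.norm_real, Complex.norm_real, Real.norm_eq_abs,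
            Real.norm_eq_abs]
          calc _ ≤ 1 * 1 * (1 / η) := by
                gcongr
                exacts [hle1 s k, hle1 t k, hinvle k]
            _ = _ := by ring
      _ = _ := by simp [div_eq_mul_inv]
  · intro s
    have : ‖B⁻¹ s s‖ ≤ 1 / η := by
      rw [hent]
      calc _ ≤ ∑ k : n, U s k ^ 2 * (1 / η) := by
            refine norm_sum_le_of_le _ fun k _ => ?_
            rw [norm_mul, norm_mul, Complex.norm_real, Real.norm_eq_abs, abs_mul_abs_self, ← pow_two]
            gcongr
            exact hinvle k
        _ = _ := by rw [← Finset.sum_mul, hrow, one_mul]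
    calc _ ≤ η * (1 / η) := by gcongr
      _ = 1 := by field_simp
  · have him : ∑ s, (B⁻¹ s s).im = ∑ k, (((l k : ℂ) - z)⁻¹).im := by
      have : ∀ s, (B⁻¹ s s).im = ∑ k, U s k ^ 2 * (((l k : ℂ) - z)⁻¹).im := by
        intro s
        rw [hent, Complex.im_sum]
        refine Finset.sum_congr rfl fun k _ => ?_
        rw [← Complex.ofReal_mul, Complex.im_ofReal_mul, pow_two]
      simp_rw [this]
      rw [Finset.sum_comm]
      refine Finset.sum_congr rfl fun k _ => ?_
      rw [← Finset.sum_mul, hcol, one_mul]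
    have himk : ∀ k, (((l k : ℂ) - z)⁻¹).im = η / ((l k - E) ^ 2 + η ^ 2) := by
      intro k
      rw [Complex.inv_im]
      simp [hz, Complex.normSq_apply]
      ring
    have hcount : (Multiset.card (A.charpoly.roots.filter (fun r => E - η ≤ r ∧ r ≤ E + η)) : ℝ)
        = ∑ k, if E - η ≤ l k ∧ l k ≤ E + η then (1 : ℝ) else 0 := by
      rw [hA.roots_charpoly_eq_eigenvalues, Multiset.filter_map, Multiset.card_map]
      rw [Finset.sum_boole]
      rfl
    rw [hcount]
    calc _ ≤ ∑ k, 2 * (η * (((l k : ℂ) - z)⁻¹).im) := by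
          refine Finset.sum_le_sum fun k _ => ?_
          rw [himk]
          have hpos : 0 < (l k - E) ^ 2 + η ^ 2 := by positivity
          split_ifs with h
          · have : (l k - E) ^ 2 ≤ η ^ 2 := by
              apply sq_le_sq'
              · linarith [h.1]
              · linarith [h.2]
            rw [← mul_div_assoc, ← mul_div_assoc, le_div_iff₀ hpos]
            nlinarith
          · positivity
      _ = ∑ s, 2 * (η * (B⁻¹ s s).im) := by
          simp only [← Finset.mul_sum, him]
      _ ≤ _ := by
          gcongr with s
          exact (le_abs_self _).trans (Complex.abs_im_le_norm _)

/-! ### Determinants with two affine rows -/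

lemma det_quadratic {n : Type*} [Fintype n] [DecidableEq n] (M : ℝ → Matrix n n ℂ) (s t : n)
    (hst : s ≠ t) (a₁ b₁ a₂ b₂ : n → ℂ)
    (hs : ∀ u : ℝ, M u s = a₁ + (u : ℂ) • b₁) (ht : ∀ u : ℝ, M u t = a₂ + (u : ℂ) • b₂)
    (hr : ∀ r, r ≠ s → r ≠ t → ∀ u, M u r = M 0 r) :
    ∃ c : Fin 3 → ℂ, ∀ u, (M u).det = qp c u := by
  have hM : ∀ u : ℝ, M u = ((M 0).updateRow s (a₁ + (u : ℂ) • b₁)).updateRow t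
      (a₂ + (u : ℂ) • b₂) := by
    intro u
    ext i j
    by_cases hit : i = t
    · subst hit; rw [updateRow_self, ht]
    · rw [updateRow_ne hit]
      by_cases his : i = s
      · subst his; rw [updateRow_self, hs]
      · rw [updateRow_ne his, hr i his hit]
  have hcomm : ∀ x y : n → ℂ, ((M 0).updateRow s x).updateRow t y =
      ((M 0).updateRow t y).updateRow s x := by
    intro x y
    exact updateRow_comm _ hst _ _
  set F : (n → ℂ) → (n → ℂ) → ℂ := fun x y => (((M 0).updateRow s x).updateRow t y).det with hF
  have hr2 : ∀ x y y' (k : ℂ), F x (y + k • y') = F x y + k * F x y' := by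
    intro x y y' k
    simp only [hF]
    rw [det_updateRow_add, det_updateRow_smul]
  have hl2 : ∀ x x' y (k : ℂ), F (x + k • x') y = F x y + k * F x' y := by
    intro x x' y k
    simp only [hF, hcomm]
    rw [det_updateRow_add, det_updateRow_smul]
  refine ⟨![F a₁ a₂, F a₁ b₂ + F b₁ a₂, F b₁ b₂], fun u => ?_⟩
  have : (M u).det = F (a₁ + (u : ℂ) • b₁) (a₂ + (u : ℂ) • b₂) := by rw [hM u]
  rw [this, hr2, hl2, hl2]
  simp [qp]
  ring

lemma adj_quadratic {n : Type*} [Fintype n] [DecidableEq n] (M : ℝ → Matrix n n ℂ) (s t : n)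
    (hst : s ≠ t) (a₁ b₁ a₂ b₂ : n → ℂ)
    (hs : ∀ u : ℝ, M u s = a₁ + (u : ℂ) • b₁) (ht : ∀ u : ℝ, M u t = a₂ + (u : ℂ) • b₂)
    (hr : ∀ r, r ≠ s → r ≠ t → ∀ u, M u r = M 0 r) (i j : n) :
    ∃ c : Fin 3 → ℂ, ∀ u, (M u).adjugate i j = qp c u := by
  simp only [adjugate_apply]
  refine det_quadratic (fun u => (M u).updateRow j (Pi.single i 1)) s t hst
    (if s = j then Pi.single i 1 else a₁) (if s = j then 0 else b₁)
    (if t = j then Pi.single i 1 else a₂) (if t = j then 0 else b₂) ?_ ?_ ?_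
  · intro u
    by_cases h : s = j
    · subst h; ext k; simp
    · ext k; simp [h, hs]
  · intro u
    by_cases h : t = j
    · subst h; ext k; simp
    · ext k; simp [h, ht]
  · intro r h1 h2 u
    by_cases h : r = j
    · subst h; ext k; simp
    · ext k; simp [h, hr r h1 h2 u]
lemma dist1_self {d : ℕ} (x : Fin d → ℤ) : dist1 x x = 0 := by
  simp [dist1]

/-- Neighbours of a position. -/
def nbr {d : ℕ} {Λ : Finset (Fin d → ℤ)} (x : {x // x ∈ Λ}) : Finset {x // x ∈ Λ} :=
  Finset.univ.filter (fun y => dist1 (x : Fin d → ℤ) (y : Fin d → ℤ) = 1)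

lemma nbr_card_s14 {d : ℕ} {Λ : Finset (Fin d → ℤ)} (x : {x // x ∈ Λ}) : (nbr x).card ≤ 3 ^ d := by
  have h1 : (nbr x).card ≤ (Fintype.piFinset (fun _ : Fin d => Finset.Icc (-1 : ℤ) 1)).card := by
    refine Finset.card_le_card_of_injOn (fun y => fun i => (x : Fin d → ℤ) i - (y : Fin d → ℤ) i)
      ?_ ?_
    · intro y hy
      have hy' : dist1 (x : Fin d → ℤ) (y : Fin d → ℤ) = 1 := by
        simpa [nbr] using hy
      simp only [Finset.mem_coe, Fintype.mem_piFinset, Finset.mem_Icc]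
      intro i
      have h2 : ((x : Fin d → ℤ) i - (y : Fin d → ℤ) i).natAbs ≤ 1 := by
        rw [← hy', dist1]
        exact Finset.single_le_sum
          (f := fun i => ((x : Fin d → ℤ) i - (y : Fin d → ℤ) i).natAbs)
          (fun _ _ => Nat.zero_le _) (Finset.mem_univ i)
      omega
    · intro y _ y' _ h
      apply Subtype.ext
      funext i
      have := congrFun h i
      simp only at this
      omega
  refine h1.trans ?_
  rw [Fintype.card_piFinset]
  simp

lemma ham_herm (d : ℕ) (γ : ℝ) (Λ : Finset (Fin d → ℤ)) (u : {x // x ∈ Λ} → ℝ) :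
    (Ham d γ Λ u).IsHermitian := by
  ext s t
  rw [conjTranspose_apply, star_trivial]
  unfold Ham
  by_cases h : s.1 = t.1
  · by_cases h2 : s.2 = t.2
    · simp [h, h2]
    · simp [h, h2, Ne.symm h2]
  · rw [if_neg h, if_neg (Ne.symm h), dist1_comm]
    simp only [eq_comm]

/-- The shifted complex Hamiltonian. -/
noncomputable def Hz (d : ℕ) (γ : ℝ) (Λ : Finset (Fin d → ℤ)) (z : ℂ)
    (u : {x // x ∈ Λ} → ℝ) : Matrix ({x // x ∈ Λ} × Fin 2) ({x // x ∈ Λ} × Fin 2) ℂ :=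
  (Ham d γ Λ u).map (fun x : ℝ => (x : ℂ)) - z • 1

lemma continuous_Hz (d : ℕ) (γ : ℝ) (Λ : Finset (Fin d → ℤ)) (z : ℂ) :
    Continuous (Hz d γ Λ z) := by
  unfold Hz
  refine Continuous.sub ?_ continuous_const
  refine continuous_matrix fun s t => ?_
  simp only [Matrix.map_apply]
  refine Complex.continuous_ofReal.comp ?_
  unfold Ham
  split_ifs <;> fun_prop

lemma measurable_G (d : ℕ) (γ : ℝ) (Λ : Finset (Fin d → ℤ)) (z : ℂ)
    (s t : {x // x ∈ Λ} × Fin 2) : Measurable (fun u => (Hz d γ Λ z u)⁻¹ s t) := by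
  have h1 : Measurable fun u => (Hz d γ Λ z u).det := (continuous_Hz d γ Λ z).matrix_det.measurable
  have h2 : Measurable fun u => (Hz d γ Λ z u).adjugate s t :=
    ((continuous_Hz d γ Λ z).matrix_adjugate.matrix_elem s t).measurable
  simp only [inv_def, Matrix.smul_apply, Ring.inverse_eq_inv', smul_eq_mul]
  exact h1.inv.mul h2

lemma Hz_det (d : ℕ) (γ : ℝ) (Λ : Finset (Fin d → ℤ)) (E η : ℝ) (hη : 0 < η)
    (u : {x // x ∈ Λ} → ℝ) : (Hz d γ Λ ⟨E, η⟩ u).det ≠ 0 :=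
  (resolvent_facts _ (ham_herm d γ Λ u) E η hη _ rfl).1

lemma G_ratio (d : ℕ) (γ : ℝ) (Λ : Finset (Fin d → ℤ)) (E η : ℝ) (hη : 0 < η)
    (u : {x // x ∈ Λ} → ℝ) (x : {x // x ∈ Λ}) (s t : {x // x ∈ Λ} × Fin 2) :
    ∃ p q : Fin 3 → ℂ, qs q ≠ 0 ∧ ∀ τ : ℝ,
      ‖(Hz d γ Λ ⟨E, η⟩ (Function.update u x τ))⁻¹ s t‖ₑ = ‖qp p τ‖ₑ / ‖qp q τ‖ₑ := by
  set z : ℂ := ⟨E, η⟩ with hz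
  set M : ℝ → Matrix ({x // x ∈ Λ} × Fin 2) ({x // x ∈ Λ} × Fin 2) ℂ :=
    fun τ => Hz d γ Λ z (Function.update u x τ) with hM
  have hst : (x, (0 : Fin 2)) ≠ (x, (1 : Fin 2)) := by simp
  have h0 : ∀ τ : ℝ, M τ (x, 0) = M 0 (x, 0) + (τ : ℂ) • (Pi.single (x, 0) 1) := by
    intro τ
    ext ⟨y, j⟩
    simp only [hM, Hz, Matrix.sub_apply, Matrix.map_apply, Matrix.smul_apply, Pi.add_apply, Pi.smul_apply]
    unfold Ham
    by_cases hy : x = y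
    · subst hy
      fin_cases j
      · simp; ring
      · simp
    · have hne : ((y, j) : {x // x ∈ Λ} × Fin 2) ≠ (x, 0) := by
        intro h; exact hy (congrArg Prod.fst h).symm
      simp [hy]
  have h1 : ∀ τ : ℝ, M τ (x, 1) = M 0 (x, 1) + (τ : ℂ) • (-(Pi.single (x, 1) 1)) := by
    intro τ
    ext ⟨y, j⟩
    simp only [hM, Hz, Matrix.sub_apply, Matrix.map_apply, Matrix.smul_apply, Pi.add_apply, Pi.smul_apply, Pi.neg_apply]
    unfold Ham
    by_cases hy : x = y
    · subst hy
      fin_cases j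
      · simp
      · simp; ring
    · have hne : ((y, j) : {x // x ∈ Λ} × Fin 2) ≠ (x, 1) := by
        intro h; exact hy (congrArg Prod.fst h).symm
      simp [hy]
  have hr : ∀ r, r ≠ (x, 0) → r ≠ (x, 1) → ∀ τ, M τ r = M 0 r := by
    rintro ⟨y, i⟩ hy0 hy1 τ
    have hy : y ≠ x := by
      rintro rfl
      fin_cases i
      · exact hy0 rfl
      · exact hy1 rfl
    ext ⟨w, j⟩
    simp only [hM, Hz, Matrix.sub_apply, Matrix.map_apply, Matrix.smul_apply]
    unfold Ham
    simp [Function.update_of_ne hy]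
  obtain ⟨q, hq⟩ := det_quadratic M (x, 0) (x, 1) hst _ _ _ _ h0 h1 hr
  obtain ⟨p, hp⟩ := adj_quadratic M (x, 0) (x, 1) hst _ _ _ _ h0 h1 hr s t
  have hdet : ∀ τ, qp q τ ≠ 0 := fun τ => by
    rw [← hq τ]; exact Hz_det d γ Λ E η hη _
  refine ⟨p, q, ?_, fun τ => ?_⟩
  · intro h
    have := qp_le q (u := 0) (by simp)
    rw [h] at this
    exact hdet 0 (by simpa using this)
  · change ‖(M τ)⁻¹ s t‖ₑ = _
    rw [inv_def, Matrix.smul_apply, Ring.inverse_eq_inv', smul_eq_mul, hq, hp, enorm_mul,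
      enorm_inv (hdet τ), mul_comm, div_eq_mul_inv]

/-- The one-site determinant polynomial `z² - 1 - u²`. -/
noncomputable def ep (z : ℂ) : Fin 3 → ℂ := ![z ^ 2 - 1, 0, -1]

/-- The single-site weight. -/
noncomputable def wt (z : ℂ) (τ : ℝ) : ENNReal := (qs (ep z) / ‖qp (ep z) τ‖ₑ) ^ ((1 : ℝ) / 8)

lemma measurable_wt (z : ℂ) : Measurable (wt z) := by
  unfold wt
  have := measurable_qp (ep z)
  fun_prop

lemma weighted_bound : ∃ C : NNReal, 1 ≤ C ∧ ∀ (d : ℕ) (γ : ℝ) (Λ : Finset (Fin d → ℤ)) (E η : ℝ),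
    0 < η → ∀ x : {x // x ∈ Λ},
    (∫⁻ u, wt ⟨E, η⟩ (u x) ∂(unifPi {x // x ∈ Λ}) ≤ C) ∧
    ∀ s t, ∫⁻ u, wt ⟨E, η⟩ (u x) * ‖(Hz d γ Λ ⟨E, η⟩ u)⁻¹ s t‖ₑ ^ ((1 : ℝ) / 8)
        ∂(unifPi {x // x ∈ Λ}) ≤
      C * ∫⁻ u, ‖(Hz d γ Λ ⟨E, η⟩ u)⁻¹ s t‖ₑ ^ ((1 : ℝ) / 8) ∂(unifPi {x // x ∈ Λ}) := by
  obtain ⟨C, hC1, hC⟩ := decouple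
  refine ⟨C, hC1, fun d γ Λ E η hη x => ⟨?_, fun s t => ?_⟩⟩
  · have h1 : ∫⁻ u, wt ⟨E, η⟩ (u x) ∂(unifPi {x // x ∈ Λ}) ≤
        ∫⁻ u, (C : ENNReal) ∂(unifPi {x // x ∈ Λ}) := by
      unfold unifPi
      have hm := measurable_wt ⟨E, η⟩
      refine lintegral_le_of_lmarginal_le {x} (by fun_prop) measurable_const ?_
      rw [lmarginal_singleton, lmarginal_singleton]
      intro u
      simp only [Function.update_self]
      have := hC (ep ⟨E, η⟩) ![1, 0, 0] ![1, 0, 0] (by simp [qs])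
      simpa [qp, wt] using this
    refine h1.trans ?_
    unfold unifPi
    simp
  · have hG := measurable_G d γ Λ ⟨E, η⟩ s t
    have hm := measurable_wt ⟨E, η⟩
    have hG2 : Measurable fun u => ‖(Hz d γ Λ ⟨E, η⟩ u)⁻¹ s t‖ₑ ^ ((1 : ℝ) / 8) :=
      hG.enorm.pow_const _
    rw [← lintegral_const_mul _ hG2]
    unfold unifPi
    refine lintegral_le_of_lmarginal_le {x} ((hm.comp (measurable_pi_apply x)).mul hG2)
      (hG2.const_mul _) ?_
    rw [lmarginal_singleton, lmarginal_singleton]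
    intro u
    obtain ⟨p, q, hq, hpq⟩ := G_ratio d γ Λ E η hη u x s t
    simp only [Function.update_self, hpq]
    rw [lintegral_const_mul]
    · exact hC _ p q hq
    · have := measurable_qp p
      have := measurable_qp q
      fun_prop

lemma row_eq (d : ℕ) (γ : ℝ) (Λ : Finset (Fin d → ℤ)) (E η : ℝ) (hη : 0 < η)
    (u : {x // x ∈ Λ} → ℝ) (x : {x // x ∈ Λ}) (t : {x // x ∈ Λ} × Fin 2)
    (G : Matrix ({x // x ∈ Λ} × Fin 2) ({x // x ∈ Λ} × Fin 2) ℂ)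
    (hG : G = (Hz d γ Λ ⟨E, η⟩ u)⁻¹) :
    ((u x : ℂ) - ⟨E, η⟩) * G (x, 0) t + G (x, 1) t + γ * ∑ y ∈ nbr x, G (y, 0) t =
      (1 : Matrix ({x // x ∈ Λ} × Fin 2) ({x // x ∈ Λ} × Fin 2) ℂ) (x, 0) t ∧
    G (x, 0) t + (-(u x : ℂ) - ⟨E, η⟩) * G (x, 1) t + γ * ∑ y ∈ nbr x, G (y, 1) t =
      (1 : Matrix ({x // x ∈ Λ} × Fin 2) ({x // x ∈ Λ} × Fin 2) ℂ) (x, 1) t := by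
  set z : ℂ := ⟨E, η⟩ with hz
  have hmul : Hz d γ Λ z u * G = 1 := by
    rw [hG]
    exact Matrix.mul_nonsing_inv _ (isUnit_iff_ne_zero.2 (Hz_det d γ Λ E η hη u))
  constructor
  · have h := congrFun (congrFun hmul (x, 0)) t
    rw [← h, Matrix.mul_apply, Fintype.sum_prod_type]
    have hterm : ∀ y : {x // x ∈ Λ}, ∑ j : Fin 2, Hz d γ Λ z u (x, 0) (y, j) * G (y, j) t =
        (if y = x then ((u x : ℂ) - z) * G (x, 0) t + G (x, 1) t else 0) +
        (if dist1 (x : Fin d → ℤ) (y : Fin d → ℤ) = 1 then γ * G (y, 0) t else 0) := by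
      intro y
      rw [Fin.sum_univ_two]
      simp only [Hz, Matrix.sub_apply, Matrix.map_apply, Matrix.smul_apply]
      unfold Ham
      by_cases hy : y = x
      · subst hy
        simp [dist1_self]
      · by_cases hd : dist1 (x : Fin d → ℤ) (y : Fin d → ℤ) = 1
        · simp [hy, Ne.symm hy, hd]
        · simp [hy, Ne.symm hy, hd]
    rw [Finset.sum_congr rfl fun y _ => hterm y, Finset.sum_add_distrib, Finset.sum_ite_eq',
      if_pos (Finset.mem_univ x), Finset.mul_sum, nbr, Finset.sum_filter]
  · have h := congrFun (congrFun hmul (x, 1)) t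
    rw [← h, Matrix.mul_apply, Fintype.sum_prod_type]
    have hterm : ∀ y : {x // x ∈ Λ}, ∑ j : Fin 2, Hz d γ Λ z u (x, 1) (y, j) * G (y, j) t =
        (if y = x then G (x, 0) t + (-(u x : ℂ) - z) * G (x, 1) t else 0) +
        (if dist1 (x : Fin d → ℤ) (y : Fin d → ℤ) = 1 then γ * G (y, 1) t else 0) := by
      intro y
      rw [Fin.sum_univ_two]
      simp only [Hz, Matrix.sub_apply, Matrix.map_apply, Matrix.smul_apply]
      unfold Ham
      by_cases hy : y = x
      · subst hy
        simp [dist1_self]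
      · by_cases hd : dist1 (x : Fin d → ℤ) (y : Fin d → ℤ) = 1
        · simp [hy, Ne.symm hy, hd]
        · simp [hy, Ne.symm hy, hd]
    rw [Finset.sum_congr rfl fun y _ => hterm y, Finset.sum_add_distrib, Finset.sum_ite_eq',
      if_pos (Finset.mem_univ x), Finset.mul_sum, nbr, Finset.sum_filter]

lemma pointwise_real (d : ℕ) (γ : ℝ) (hγ : 0 < γ) (Λ : Finset (Fin d → ℤ)) (E η : ℝ) (hη : 0 < η)
    (u : {x // x ∈ Λ} → ℝ) (x : {x // x ∈ Λ}) (hu : u x ∈ Set.Icc (-1 : ℝ) 1)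
    (i : Fin 2) (t : {x // x ∈ Λ} × Fin 2) :
    ‖(Hz d γ Λ ⟨E, η⟩ u)⁻¹ (x, i) t‖ * ‖qp (ep ⟨E, η⟩) (u x)‖ ≤
      (‖(⟨E, η⟩ : ℂ) ^ 2 - 1‖ + 1) *
        (3 * (2 + γ * ∑ r ∈ nbr x ×ˢ Finset.univ, ‖(Hz d γ Λ ⟨E, η⟩ u)⁻¹ r t‖)) := by
  obtain ⟨h0, h1⟩ := row_eq d γ Λ E η hη u x t _ rfl
  set G := (Hz d γ Λ ⟨E, η⟩ u)⁻¹ with hG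
  set z : ℂ := ⟨E, η⟩ with hz
  set v : ℂ := (u x : ℂ) with hv
  set I := (1 : Matrix ({x // x ∈ Λ} × Fin 2) ({x // x ∈ Λ} × Fin 2) ℂ) with hI
  have hIle : ∀ r, ‖I r t‖ ≤ 1 := by
    intro r
    rw [hI, Matrix.one_apply]
    split_ifs <;> simp
  have hvle : ‖v‖ ≤ 1 := by
    rw [hv, Complex.norm_real, Real.norm_eq_abs]; exact abs_le.2 hu
  set F : Fin 2 → ℂ := fun j => I (x, j) t - γ * ∑ y ∈ nbr x, G (y, j) t with hF
  have hFle : ∀ j, ‖F j‖ ≤ 1 + γ * ∑ y ∈ nbr x, ‖G (y, j) t‖ := by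
    intro j
    calc ‖F j‖ ≤ ‖I (x, j) t‖ + ‖(γ : ℂ) * ∑ y ∈ nbr x, G (y, j) t‖ := norm_sub_le _ _
      _ ≤ _ := by
          rw [norm_mul, Complex.norm_real, Real.norm_eq_abs, abs_of_pos hγ]
          gcongr
          · exact hIle _
          · exact norm_sum_le _ _
  have hsum : ‖F 0‖ + ‖F 1‖ ≤ 2 + γ * ∑ r ∈ nbr x ×ˢ Finset.univ, ‖G r t‖ := by
    rw [Finset.sum_product]
    simp only [Fin.sum_univ_two, Finset.sum_add_distrib, mul_add]
    linarith [hFle 0, hFle 1]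
  have hS : 2 + ‖z‖ ≤ (‖z ^ 2 - 1‖ + 1) * 3 := by
    have h2 : ‖z‖ ^ 2 ≤ ‖z ^ 2 - 1‖ + 1 := by
      calc ‖z‖ ^ 2 = ‖(z ^ 2 - 1) + 1‖ := by rw [← norm_pow]; ring_nf
        _ ≤ ‖z ^ 2 - 1‖ + ‖(1 : ℂ)‖ := norm_add_le _ _
        _ = _ := by simp
    nlinarith [sq_nonneg (‖z‖ - 1), norm_nonneg (z ^ 2 - 1)]
  have hD : qp (ep z) (u x) = z ^ 2 - 1 - v ^ 2 := by
    simp [qp, ep]; ring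
  have hlin : ∀ (w a b : ℂ), ‖w‖ ≤ 1 + ‖z‖ → ‖w * a - b‖ ≤ (2 + ‖z‖) * (‖a‖ + ‖b‖) := by
    intro w a b hw
    calc ‖w * a - b‖ ≤ ‖w * a‖ + ‖b‖ := norm_sub_le _ _
      _ ≤ (1 + ‖z‖) * ‖a‖ + ‖b‖ := by rw [norm_mul]; gcongr
      _ ≤ _ := by nlinarith [norm_nonneg a, norm_nonneg b, norm_nonneg z]
  have hmain : ‖G (x, i) t‖ * ‖qp (ep z) (u x)‖ ≤ (2 + ‖z‖) * (‖F 0‖ + ‖F 1‖) := by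
    rw [← norm_mul, hD]
    fin_cases i
    · have : G (x, 0) t * (z ^ 2 - 1 - v ^ 2) = (-v - z) * F 0 - F 1 := by
        simp only [hF]
        linear_combination (-v - z) * h0 - h1
      change ‖G (x, 0) t * (z ^ 2 - 1 - v ^ 2)‖ ≤ _
      rw [this]
      apply hlin
      calc ‖-v - z‖ ≤ ‖-v‖ + ‖z‖ := norm_sub_le _ _
        _ ≤ _ := by rw [norm_neg]; gcongr
    · have : G (x, 1) t * (z ^ 2 - 1 - v ^ 2) = (v - z) * F 1 - F 0 := by
        simp only [hF]
        linear_combination (v - z) * h1 - h0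
      change ‖G (x, 1) t * (z ^ 2 - 1 - v ^ 2)‖ ≤ _
      rw [this, add_comm ‖F 0‖]
      apply hlin
      calc ‖v - z‖ ≤ ‖v‖ + ‖z‖ := norm_sub_le _ _
        _ ≤ _ := by gcongr
  calc _ ≤ (2 + ‖z‖) * (‖F 0‖ + ‖F 1‖) := hmain
    _ ≤ ((‖z ^ 2 - 1‖ + 1) * 3) * (2 + γ * ∑ r ∈ nbr x ×ˢ Finset.univ, ‖G r t‖) := by
        gcongr
    _ = _ := by ring

lemma rpow_sum_le {ι : Type*} (T : Finset ι) (f : ι → ENNReal) :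
    (∑ r ∈ T, f r) ^ ((1 : ℝ) / 8) ≤ ∑ r ∈ T, f r ^ ((1 : ℝ) / 8) :=
  Finset.le_sum_of_subadditive (fun y : ENNReal => y ^ ((1 : ℝ) / 8))
    (by simp) (fun a b => ENNReal.rpow_add_le_add_rpow a b (by norm_num) (by norm_num)) T f

lemma rpow_eighth_le_self {a : ENNReal} (ha : 1 ≤ a) : a ^ ((1 : ℝ) / 8) ≤ a := by
  calc a ^ ((1 : ℝ) / 8) ≤ a ^ (1 : ℝ) := ENNReal.rpow_le_rpow_of_exponent_le ha (by norm_num)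
    _ = a := by simp

lemma pointwise_enn (d : ℕ) (γ : ℝ) (hγ : 0 < γ) (Λ : Finset (Fin d → ℤ)) (E η : ℝ) (hη : 0 < η)
    (u : {x // x ∈ Λ} → ℝ) (x : {x // x ∈ Λ}) (hu : u x ∈ Set.Icc (-1 : ℝ) 1)
    (i : Fin 2) (t : {x // x ∈ Λ} × Fin 2) :
    ‖(Hz d γ Λ ⟨E, η⟩ u)⁻¹ (x, i) t‖ₑ ^ ((1 : ℝ) / 8) ≤
      3 * (2 * wt ⟨E, η⟩ (u x) + ENNReal.ofReal γ ^ ((1 : ℝ) / 8) *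
        ∑ r ∈ nbr x ×ˢ Finset.univ,
          wt ⟨E, η⟩ (u x) * ‖(Hz d γ Λ ⟨E, η⟩ u)⁻¹ r t‖ₑ ^ ((1 : ℝ) / 8)) := by
  have h := ENNReal.ofReal_le_ofReal (pointwise_real d γ hγ Λ E η hη u x hu i t)
  set G := (Hz d γ Λ ⟨E, η⟩ u)⁻¹ with hG
  set z : ℂ := ⟨E, η⟩ with hz
  have hnn : 0 ≤ ∑ r ∈ nbr x ×ˢ Finset.univ, ‖G r t‖ := Finset.sum_nonneg fun _ _ => norm_nonneg _
  have hqs : qs (ep z) = ENNReal.ofReal (‖z ^ 2 - 1‖ + 1) := by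
    rw [ENNReal.ofReal_add (norm_nonneg _) zero_le_one, ofReal_norm]
    simp [qs, ep]
  rw [ENNReal.ofReal_mul (norm_nonneg _), ENNReal.ofReal_mul (by positivity), ofReal_norm,
    ofReal_norm, ← hqs, ENNReal.ofReal_mul (by norm_num),
    ENNReal.ofReal_add (by norm_num) (by positivity), ENNReal.ofReal_mul hγ.le,
    ENNReal.ofReal_sum_of_nonneg (fun _ _ => norm_nonneg _)] at h
  simp only [ofReal_norm, ENNReal.ofReal_ofNat] at h
  set X := ∑ r ∈ nbr x ×ˢ Finset.univ, ‖G r t‖ₑ with hX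
  have hqs0 : qs (ep z) ≠ 0 := by simp [qs, ep]
  have h2 : ‖G (x, i) t‖ₑ ≤ (qs (ep z) / ‖qp (ep z) (u x)‖ₑ) * (3 * (2 + ENNReal.ofReal γ * X)) := by
    have h3 : (qs (ep z) / ‖qp (ep z) (u x)‖ₑ) * (3 * (2 + ENNReal.ofReal γ * X)) =
        (qs (ep z) * (3 * (2 + ENNReal.ofReal γ * X))) / ‖qp (ep z) (u x)‖ₑ := by
      rw [div_eq_mul_inv, div_eq_mul_inv]; ring
    rw [h3, ENNReal.le_div_iff_mul_le (Or.inr (by simp [hqs0])) (Or.inl enorm_ne_top)]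
    exact h
  calc _ ≤ ((qs (ep z) / ‖qp (ep z) (u x)‖ₑ) * (3 * (2 + ENNReal.ofReal γ * X))) ^ ((1 : ℝ) / 8) := by
        gcongr
    _ = wt z (u x) * (3 ^ ((1 : ℝ) / 8) * (2 + ENNReal.ofReal γ * X) ^ ((1 : ℝ) / 8)) := by
        rw [ENNReal.mul_rpow_of_nonneg _ _ (by norm_num),
          ENNReal.mul_rpow_of_nonneg _ _ (by norm_num)]; rfl
    _ ≤ wt z (u x) * (3 * (2 + ENNReal.ofReal γ ^ ((1 : ℝ) / 8) *
          ∑ r ∈ nbr x ×ˢ Finset.univ, ‖G r t‖ₑ ^ ((1 : ℝ) / 8))) := by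
        gcongr
        · exact rpow_eighth_le_self (by norm_num)
        · refine (ENNReal.rpow_add_le_add_rpow _ _ (by norm_num) (by norm_num)).trans ?_
          rw [ENNReal.mul_rpow_of_nonneg _ _ (by norm_num)]
          gcongr
          · exact rpow_eighth_le_self (by norm_num)
          · exact rpow_sum_le _ _
    _ = _ := by rw [← Finset.mul_sum]; ring

lemma sup_bound {ι : Type*} [Fintype ι] (M : ι → ENNReal) (hfin : ∀ p, M p < ⊤) (c : ENNReal)
    (hstep : ∀ S : ENNReal, (∀ p, M p ≤ S) → ∀ p, M p ≤ c + S / 2) (p : ι) : M p ≤ c + c := by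
  have key : ∀ S : ENNReal, S = Finset.univ.sup M → M p ≤ c + c := by
    intro S hS
    have hle : ∀ p, M p ≤ S := fun p => hS ▸ Finset.le_sup (Finset.mem_univ p)
    have hS1 : S < ⊤ := by
      rw [hS, Finset.sup_lt_iff (by simp)]
      exact fun p _ => hfin p
    have hS2 : S ≤ c + S / 2 := by
      calc S = Finset.univ.sup M := hS
        _ ≤ _ := Finset.sup_le fun p _ => hstep S hle p
    have hS3 : S / 2 ≤ c := by
      have h1 : S / 2 + S / 2 ≤ c + S / 2 := by rw [ENNReal.add_halves]; exact hS2
      exact (ENNReal.add_le_add_iff_right (ENNReal.div_lt_top hS1.ne (by norm_num)).ne).1 h1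
    calc M p ≤ S := hle p
      _ = S / 2 + S / 2 := (ENNReal.add_halves S).symm
      _ ≤ c + c := by gcongr
  exact key _ rfl

lemma unifPi_prob (ι : Type*) [Fintype ι] : IsProbabilityMeasure (unifPi ι) := by
  unfold unifPi; infer_instance

lemma moment_fin (d : ℕ) (γ : ℝ) (Λ : Finset (Fin d → ℤ)) (E η : ℝ) (hη : 0 < η)
    (s t : {x // x ∈ Λ} × Fin 2) :
    ∫⁻ u, ‖(Hz d γ Λ ⟨E, η⟩ u)⁻¹ s t‖ₑ ^ ((1 : ℝ) / 8) ∂(unifPi {x // x ∈ Λ}) < ⊤ := by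
  have := unifPi_prob {x // x ∈ Λ}
  have hb : ∀ u, ‖(Hz d γ Λ ⟨E, η⟩ u)⁻¹ s t‖ₑ ^ ((1 : ℝ) / 8) ≤
      ENNReal.ofReal (Fintype.card ({x // x ∈ Λ} × Fin 2) / η) ^ ((1 : ℝ) / 8) := by
    intro u
    refine ENNReal.rpow_le_rpow ?_ (by norm_num)
    rw [← ofReal_norm]
    exact ENNReal.ofReal_le_ofReal
      ((resolvent_facts _ (ham_herm d γ Λ u) E η hη _ rfl).2.1 s t)
  refine (lintegral_mono hb).trans_lt ?_
  rw [lintegral_const, measure_univ, mul_one]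
  exact ENNReal.rpow_lt_top_of_nonneg (by norm_num) ENNReal.ofReal_ne_top

lemma step_int (d : ℕ) (γ : ℝ) (hγ : 0 < γ) (Λ : Finset (Fin d → ℤ)) (E η : ℝ) (hη : 0 < η)
    (x : {x // x ∈ Λ}) (i : Fin 2) (t : {x // x ∈ Λ} × Fin 2) :
    ∫⁻ u, ‖(Hz d γ Λ ⟨E, η⟩ u)⁻¹ (x, i) t‖ₑ ^ ((1 : ℝ) / 8) ∂(unifPi {x // x ∈ Λ}) ≤
      ∫⁻ u, 3 * (2 * wt ⟨E, η⟩ (u x) + ENNReal.ofReal γ ^ ((1 : ℝ) / 8) *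
        ∑ r ∈ nbr x ×ˢ Finset.univ,
          wt ⟨E, η⟩ (u x) * ‖(Hz d γ Λ ⟨E, η⟩ u)⁻¹ r t‖ₑ ^ ((1 : ℝ) / 8))
          ∂(unifPi {x // x ∈ Λ}) := by
  have hae : ∀ᵐ u ∂(unifPi {x // x ∈ Λ}), u x ∈ Set.Icc (-1 : ℝ) 1 := by
    unfold unifPi
    exact (Measure.tendsto_eval_ae_ae (μ := fun _ : {x // x ∈ Λ} => unif) (i := x)).eventually
      unif_ae
  apply lintegral_mono_ae
  filter_upwards [hae] with u hu
  exact pointwise_enn d γ hγ Λ E η hη u x hu i t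

lemma split_int {Ω ι : Type*} [MeasurableSpace Ω] (μ : Measure Ω) (w : Ω → ENNReal)
    (f : ι → Ω → ENNReal) (hw : Measurable w) (hf : ∀ r, Measurable (f r)) (T : Finset ι)
    (g : ENNReal) :
    ∫⁻ u, 3 * (2 * w u + g * ∑ r ∈ T, w u * f r u) ∂μ =
      3 * (2 * ∫⁻ u, w u ∂μ + g * ∑ r ∈ T, ∫⁻ u, w u * f r u ∂μ) := by
  have hmG : ∀ r, Measurable fun u => w u * f r u := fun r => hw.mul (hf r)
  have hms : Measurable fun u => ∑ r ∈ T, w u * f r u :=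
    Finset.measurable_fun_sum _ fun r _ => hmG r
  have hsum : Measurable fun u => 2 * w u + g * ∑ r ∈ T, w u * f r u :=
    (hw.const_mul 2).add (hms.const_mul g)
  rw [lintegral_const_mul _ hsum, lintegral_add_left (hw.const_mul _), lintegral_const_mul _ hw,
    lintegral_const_mul _ hms, lintegral_finsetSum _ fun r _ => hmG r]

lemma step_arith {ι : Type*} (d : ℕ) (T : Finset ι) (hT : T.card ≤ 2 * 3 ^ d)
    (C g S a : ENNReal) (f : ι → ENNReal) (ha : a ≤ C) (hf : ∀ r, f r ≤ C * S)
    (hsmall : 12 * C * 3 ^ d * g ≤ 1) :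
    3 * (2 * a + g * ∑ r ∈ T, f r) ≤ 6 * C + S / 2 := by
  have hcard : (T.card : ENNReal) ≤ 2 * 3 ^ d := by exact_mod_cast hT
  calc 3 * (2 * a + g * ∑ r ∈ T, f r) ≤ 3 * (2 * C + g * ∑ r ∈ T, C * S) := by
        gcongr with r hr
        exact hf r
    _ ≤ 3 * (2 * C + g * ((2 * 3 ^ d) * (C * S))) := by
        rw [Finset.sum_const, nsmul_eq_mul]
        gcongr
    _ = 6 * C + (12 * C * 3 ^ d * g) * (S / 2) := by
        have : S = 2 * (S / 2) := (ENNReal.mul_div_cancel (by norm_num) (by norm_num)).symm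
        conv_lhs => rw [this]
        ring
    _ ≤ 6 * C + 1 * (S / 2) := by gcongr
    _ = _ := by rw [one_mul]

lemma moment_bound : ∃ C : NNReal, 1 ≤ C ∧ ∀ (d : ℕ) (γ : ℝ), 0 < γ →
    12 * (C : ENNReal) * 3 ^ d * ENNReal.ofReal γ ^ ((1 : ℝ) / 8) ≤ 1 →
    ∀ (Λ : Finset (Fin d → ℤ)) (E η : ℝ), 0 < η → ∀ s t,
    ∫⁻ u, ‖(Hz d γ Λ ⟨E, η⟩ u)⁻¹ s t‖ₑ ^ ((1 : ℝ) / 8) ∂(unifPi {x // x ∈ Λ}) ≤ 12 * C := by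
  obtain ⟨C, hC1, hC⟩ := weighted_bound
  refine ⟨C, hC1, fun d γ hγ hsmall Λ E η hη s t => ?_⟩
  have h := sup_bound (fun p : ({x // x ∈ Λ} × Fin 2) × ({x // x ∈ Λ} × Fin 2) =>
    ∫⁻ u, ‖(Hz d γ Λ ⟨E, η⟩ u)⁻¹ p.1 p.2‖ₑ ^ ((1 : ℝ) / 8) ∂(unifPi {x // x ∈ Λ}))
    (fun p => moment_fin d γ Λ E η hη p.1 p.2) (6 * C) ?_ (s, t)
  · refine h.trans (le_of_eq ?_)
    ring
  · rintro S hS ⟨⟨x, i⟩, t⟩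
    refine (step_int d γ hγ Λ E η hη x i t).trans ?_
    rw [split_int (unifPi {x // x ∈ Λ}) (fun u => wt ⟨E, η⟩ (u x))
      (fun r u => ‖(Hz d γ Λ ⟨E, η⟩ u)⁻¹ r t‖ₑ ^ ((1 : ℝ) / 8))
      ((measurable_wt _).comp (measurable_pi_apply x))
      (fun r => (measurable_G d γ Λ _ r t).enorm.pow_const _)]
    refine step_arith d _ ?_ C _ S _ _ (hC d γ Λ E η hη x).1 (fun r => ?_) hsmall
    · rw [Finset.card_product, Finset.card_univ, Fintype.card_fin, mul_comm]
      exact Nat.mul_le_mul_left 2 (nbr_card_s14 x)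
    · exact ((hC d γ Λ E η hη x).2 r t).trans (mul_le_mul_right (hS (r, t)) _)

lemma count_bound : ∃ C : NNReal, 1 ≤ C ∧ ∀ (d : ℕ) (γ : ℝ), 0 < γ →
    12 * (C : ℝ) * 3 ^ d * γ ^ ((1 : ℝ) / 8) ≤ 1 →
    ∀ (Λ : Finset (Fin d → ℤ)) (E δ : ℝ), 0 < δ →
    ∫ u, (eigCount d γ Λ u E δ : ℝ) ∂(unifPi {x // x ∈ Λ}) ≤
      48 * C * Λ.card * δ ^ ((1 : ℝ) / 8) := by
  obtain ⟨C, hC1, hC⟩ := moment_bound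
  refine ⟨C, hC1, fun d γ hγ hsmall Λ E δ hδ => ?_⟩
  have hsmall' : 12 * (C : ENNReal) * 3 ^ d * ENNReal.ofReal γ ^ ((1 : ℝ) / 8) ≤ 1 := by
    have h := ENNReal.ofReal_le_ofReal hsmall
    rw [ENNReal.ofReal_mul (by positivity), ENNReal.ofReal_mul (by positivity),
      ENNReal.ofReal_mul (by positivity), ENNReal.ofReal_pow (by norm_num),
      ← ENNReal.ofReal_rpow_of_pos hγ] at h
    simpa using h
  have hη : 0 < δ / 2 := by positivity
  set η := δ / 2 with hηd
  have hC' := hC d γ hγ hsmall' Λ E η hη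
  have hpt : ∀ u : {x // x ∈ Λ} → ℝ, ‖(eigCount d γ Λ u E δ : ℝ)‖ₑ ≤
      ∑ s, 2 * (ENNReal.ofReal η ^ ((1 : ℝ) / 8) *
        ‖(Hz d γ Λ ⟨E, η⟩ u)⁻¹ s s‖ₑ ^ ((1 : ℝ) / 8)) := by
    intro u
    obtain ⟨-, -, h1, h2⟩ := resolvent_facts _ (ham_herm d γ Λ u) E η hη _ rfl
    have h3 : (eigCount d γ Λ u E δ : ℝ) ≤ ∑ s, 2 * (η * ‖(Hz d γ Λ ⟨E, η⟩ u)⁻¹ s s‖) := h2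
    rw [Real.enorm_eq_ofReal (Nat.cast_nonneg _)]
    refine (ENNReal.ofReal_le_ofReal h3).trans ?_
    rw [ENNReal.ofReal_sum_of_nonneg (fun s _ => by positivity)]
    refine Finset.sum_le_sum fun s _ => ?_
    rw [ENNReal.ofReal_mul (by norm_num), ENNReal.ofReal_ofNat]
    gcongr
    rw [← ENNReal.mul_rpow_of_nonneg _ _ (by norm_num), ← ofReal_norm, ← ENNReal.ofReal_mul hη.le]
    set y := ENNReal.ofReal (η * ‖(Hz d γ Λ ⟨E, η⟩ u)⁻¹ s s‖) with hy
    have hy1 : y ≤ 1 := ENNReal.ofReal_le_one.2 (h1 s)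
    calc y = y ^ (1 : ℝ) := by simp
      _ ≤ _ := ENNReal.rpow_le_rpow_of_exponent_ge hy1 (by norm_num)
  have hmG : ∀ s, Measurable fun u => ‖(Hz d γ Λ ⟨E, η⟩ u)⁻¹ s s‖ₑ ^ ((1 : ℝ) / 8) :=
      fun s => (measurable_G d γ Λ ⟨E, η⟩ s s).enorm.pow_const _
  have hNint : ‖∫ u, (eigCount d γ Λ u E δ : ℝ) ∂(unifPi {x // x ∈ Λ})‖ₑ ≤
      ENNReal.ofReal (48 * C * Λ.card * η ^ ((1 : ℝ) / 8)) := by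
    calc _ ≤ ∫⁻ u, ‖(eigCount d γ Λ u E δ : ℝ)‖ₑ ∂(unifPi {x // x ∈ Λ}) :=
          enorm_integral_le_lintegral_enorm _
      _ ≤ _ := lintegral_mono hpt
      _ = ∑ s, 2 * (ENNReal.ofReal η ^ ((1 : ℝ) / 8) *
          ∫⁻ u, ‖(Hz d γ Λ ⟨E, η⟩ u)⁻¹ s s‖ₑ ^ ((1 : ℝ) / 8) ∂(unifPi {x // x ∈ Λ})) := by
          rw [lintegral_finsetSum _ fun s _ => ((hmG s).const_mul _).const_mul _]
          refine Finset.sum_congr rfl fun s _ => ?_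
          rw [lintegral_const_mul _ ((hmG s).const_mul _), lintegral_const_mul _ (hmG s)]
      _ ≤ ∑ s : {x // x ∈ Λ} × Fin 2, 2 * (ENNReal.ofReal η ^ ((1 : ℝ) / 8) * (12 * C)) := by
          gcongr with s
          exact hC' s s
      _ = _ := by
          rw [Finset.sum_const, nsmul_eq_mul, Finset.card_univ, Fintype.card_prod, Fintype.card_fin,
            Fintype.card_coe, ENNReal.ofReal_mul (by positivity), ENNReal.ofReal_mul (by positivity),
            ENNReal.ofReal_mul (by norm_num), ← ENNReal.ofReal_rpow_of_pos hη]
          simp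
          ring
  have hb : ∫ u, (eigCount d γ Λ u E δ : ℝ) ∂(unifPi {x // x ∈ Λ}) ≤
      48 * C * Λ.card * η ^ ((1 : ℝ) / 8) := by
    rw [← ofReal_norm, ENNReal.ofReal_le_ofReal_iff (by positivity)] at hNint
    exact (le_abs_self _).trans hNint
  refine hb.trans ?_
  gcongr
  rw [hηd]; linarith

/-- density of states estimate. There are `b, γ₀ > 0` such that for all
`0 < γ ≤ γ₀`, `0 < δ ≤ γ^{1/4}`, every rectangle `Λ` and every `E`:
`𝔼 N([E-δ/2, E+δ/2]) ≤ 4|Λ|·exp(-b·|log γ|^{2/3}·|log δ|^{1/3})`. -/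
theorem density_of_states (d : ℕ) (hd : 1 ≤ d) :
    ∃ b γ₀ : ℝ, 0 < b ∧ 0 < γ₀ ∧
      ∀ γ : ℝ, 0 < γ → γ ≤ γ₀ →
      ∀ δ : ℝ, 0 < δ → δ ≤ γ ^ ((1 : ℝ) / 4) →
      ∀ Λ : Finset (Fin d → ℤ), (∃ a b', Λ = Finset.Icc a b') →
      ∀ E : ℝ,
      ∫ u, (eigCount d γ Λ u E δ : ℝ) ∂(unifPi {x // x ∈ Λ}) ≤
        4 * (Λ.card : ℝ) *
          Real.exp (-(b * |Real.log γ| ^ ((2 : ℝ) / 3) * |Real.log δ| ^ ((1 : ℝ) / 3))) := by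
  obtain ⟨C, hC1, hC⟩ := count_bound
  have hC1' : (1 : ℝ) ≤ C := by exact_mod_cast hC1
  set k : ℝ := 12 * C * 3 ^ d with hk
  have h3d : (1 : ℝ) ≤ 3 ^ d := one_le_pow₀ (by norm_num)
  have hk1 : 1 < k := by nlinarith
  have hk12 : 12 * (C : ℝ) ≤ k := by nlinarith
  have hk0 : 0 < k := by linarith
  refine ⟨1 / 64, (k⁻¹) ^ (64 : ℕ), by norm_num, by positivity, ?_⟩
  intro γ hγ hγ0 δ hδ hδγ Λ _ E
  have hγ64 : γ ^ ((1 : ℝ) / 64) ≤ k⁻¹ := by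
    calc γ ^ ((1 : ℝ) / 64) ≤ ((k⁻¹) ^ (64 : ℕ)) ^ ((1 : ℝ) / 64) := by gcongr
      _ = k⁻¹ := by
        rw [← Real.rpow_natCast, ← Real.rpow_mul (by positivity)]; norm_num
  have hγ1 : γ < 1 := by
    refine lt_of_le_of_lt hγ0 (pow_lt_one₀ (by positivity) (inv_lt_one_of_one_lt₀ hk1) (by norm_num))
  have hγ8 : γ ^ ((1 : ℝ) / 8) ≤ k⁻¹ :=
    (Real.rpow_le_rpow_of_exponent_ge hγ hγ1.le (by norm_num)).trans hγ64
  have hmain := hC d γ hγ (by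
    rw [← hk]
    calc k * γ ^ ((1 : ℝ) / 8) ≤ k * k⁻¹ := by gcongr
      _ = 1 := mul_inv_cancel₀ hk0.ne') Λ E δ hδ
  refine hmain.trans ?_
  have hδ16 : δ ^ ((1 : ℝ) / 16) ≤ k⁻¹ := by
    calc δ ^ ((1 : ℝ) / 16) ≤ (γ ^ ((1 : ℝ) / 4)) ^ ((1 : ℝ) / 16) := by gcongr
      _ = γ ^ ((1 : ℝ) / 64) := by rw [← Real.rpow_mul hγ.le]; norm_num
      _ ≤ _ := hγ64
  have hlogγ : Real.log γ < 0 := Real.log_neg hγ hγ1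
  have hlog : Real.log δ ≤ 1 / 4 * Real.log γ := by
    have := Real.log_le_log hδ hδγ
    rwa [Real.log_rpow hγ] at this
  have hlogδ : Real.log δ < 0 := by linarith
  set D := |Real.log δ| with hD
  have hDe : D = -Real.log δ := abs_of_neg hlogδ
  have hD0 : 0 < D := by linarith
  have hL : |Real.log γ| ≤ 4 * D := by rw [abs_of_neg hlogγ]; linarith
  have hX : |Real.log γ| ^ ((2 : ℝ) / 3) * D ^ ((1 : ℝ) / 3) ≤ 4 * D := by
    calc _ ≤ (4 * D) ^ ((2 : ℝ) / 3) * (4 * D) ^ ((1 : ℝ) / 3) := by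
          gcongr; linarith
      _ = 4 * D := by
          rw [← Real.rpow_add (by positivity)]; norm_num
  have hexp : δ ^ ((1 : ℝ) / 16) ≤
      Real.exp (-(1 / 64 * |Real.log γ| ^ ((2 : ℝ) / 3) * D ^ ((1 : ℝ) / 3))) := by
    rw [Real.rpow_def_of_pos hδ]
    apply Real.exp_le_exp.2
    rw [mul_assoc]
    linarith
  have hδ8 : δ ^ ((1 : ℝ) / 8) = δ ^ ((1 : ℝ) / 16) * δ ^ ((1 : ℝ) / 16) := by
    rw [← Real.rpow_add hδ]; norm_num
  calc 48 * C * Λ.card * δ ^ ((1 : ℝ) / 8)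
      = 4 * Λ.card * ((12 * C) * δ ^ ((1 : ℝ) / 16) * δ ^ ((1 : ℝ) / 16)) := by rw [hδ8]; ring
    _ ≤ 4 * Λ.card * (k * k⁻¹ * δ ^ ((1 : ℝ) / 16)) := by gcongr
    _ = 4 * Λ.card * δ ^ ((1 : ℝ) / 16) := by rw [mul_inv_cancel₀ hk0.ne', one_mul]
    _ ≤ _ := by gcongr
end
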